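/- arXiv:2303.09578 — 10 statements merged into one kernel-verified Lean document; each statement's English description precedes it below -/
import Mathlib

section
/- For every n ≥ 4: every n-vertex 3-graph in which every 4-element vertex set spans exactly 1 or exactly 4 edges has a homogeneous set of size at least n − 1; moreover, there exists such an n-vertex 3-graph whose largest homogeneous set has size exactly n − 1. Hence the minimum of h(H) over all n-vertex 3-graphs H that are (4,0)-free, (4,2)-free and (4,3)-free equals n − 1. -/
/-!
Call a 3-graph *good* if every 4-set spans one or four edges.

Upper bound on the minimum: the complete 3-graph on all vertices but one, with that vertex
isolated, is good; a 4-set spans `choose 3 3` or `choose 4 3` edges according to whether it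
contains the isolated vertex, and the whole vertex set is neither a clique nor a coclique.

Lower bound: a good 3-graph either is complete or has a non-edge `abc`. In the latter case a
fourth vertex `d` lies in the unique edge of `abcd`, say `bcd`. Inspecting the five 4-subsets of
`abcde` shows that `bce`, `bde` and `cde` are edges too, for every further vertex `e`
(`five_vertices`). For three vertices `x, y, z` outside `{a, b, c}`, the 4-set `bxyz` now spans at
least three, hence four edges, so `xyz` is an edge. Thus the vertices other than `a` form a
clique (`clique_of_nonedge`).
-/

/-- The edges inside a set of four distinct vertices: exactly one, or all four. -/
lemma four_vertices {α : Type*} [DecidableEq α] {E : Finset (Finset α)}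
    (hE : ∀ e ∈ E, e.card = 3)
    (hS : ∀ S : Finset α, S.card = 4 →
      (E.filter (fun e => e ⊆ S)).card = 1 ∨ (E.filter (fun e => e ⊆ S)).card = 4)
    {a b c d : α} (hab : a ≠ b) (hac : a ≠ c) (had : a ≠ d) (hbc : b ≠ c) (hbd : b ≠ d)
    (hcd : c ≠ d) :
    (({a, b, c} ∈ E ∧ {a, b, d} ∈ E ∧ {a, c, d} ∈ E ∧ {b, c, d} ∈ E) ∨
     ({a, b, c} ∈ E ∧ {a, b, d} ∉ E ∧ {a, c, d} ∉ E ∧ {b, c, d} ∉ E) ∨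
     ({a, b, c} ∉ E ∧ {a, b, d} ∈ E ∧ {a, c, d} ∉ E ∧ {b, c, d} ∉ E) ∨
     ({a, b, c} ∉ E ∧ {a, b, d} ∉ E ∧ {a, c, d} ∈ E ∧ {b, c, d} ∉ E) ∨
     ({a, b, c} ∉ E ∧ {a, b, d} ∉ E ∧ {a, c, d} ∉ E ∧ {b, c, d} ∈ E)) := by
  have h := hS {a, b, c, d} (by grind)
  -- A 3-subset of a 4-set is obtained by removing one vertex.
  have hset : E.filter (fun e => e ⊆ {a, b, c, d}) =
      ({{a, b, c}, {a, b, d}, {a, c, d}, {b, c, d}} : Finset (Finset α)).filter (· ∈ E) := by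
    ext e
    simp only [Finset.mem_filter, Finset.mem_insert, Finset.mem_singleton]
    constructor
    · rintro ⟨he, hsub⟩
      refine ⟨?_, he⟩
      have h1 : (({a, b, c, d} : Finset α) \ e).card = 1 := by
        rw [Finset.card_sdiff_of_subset hsub, hE e he]
        have : ({a, b, c, d} : Finset α).card = 4 := by grind
        omega
      obtain ⟨x, hx⟩ := Finset.card_eq_one.1 h1
      have he' : e = ({a, b, c, d} : Finset α).erase x := by
        rw [← Finset.sdiff_singleton_eq_erase, ← hx, Finset.sdiff_sdiff_eq_self hsub]
      have hx' : x ∈ ({a, b, c, d} : Finset α) \ e := by simp [hx]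
      have hx4 : x = a ∨ x = b ∨ x = c ∨ x = d := by
        simpa using (Finset.mem_sdiff.1 hx').1
      rcases hx4 with rfl | rfl | rfl | rfl
      · right; right; right; rw [he']; ext y; grind
      · right; right; left; rw [he']; ext y; grind
      · right; left; rw [he']; ext y; grind
      · left; rw [he']; ext y; grind
    · rintro ⟨rfl | rfl | rfl | rfl, he⟩ <;> refine ⟨he, ?_⟩ <;> intro y <;> grind
  have n1 : ({a, b, c} : Finset α) ≠ {a, b, d} := fun h => by
    have : c ∈ ({a, b, d} : Finset α) := h ▸ by simp
    grind
  have n2 : ({a, b, c} : Finset α) ≠ {a, c, d} := fun h => by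
    have : b ∈ ({a, c, d} : Finset α) := h ▸ by simp
    grind
  have n3 : ({a, b, c} : Finset α) ≠ {b, c, d} := fun h => by
    have : a ∈ ({b, c, d} : Finset α) := h ▸ by simp
    grind
  have n4 : ({a, b, d} : Finset α) ≠ {a, c, d} := fun h => by
    have : b ∈ ({a, c, d} : Finset α) := h ▸ by simp
    grind
  have n5 : ({a, b, d} : Finset α) ≠ {b, c, d} := fun h => by
    have : a ∈ ({b, c, d} : Finset α) := h ▸ by simp
    grind
  have n6 : ({a, c, d} : Finset α) ≠ {b, c, d} := fun h => by
    have : a ∈ ({b, c, d} : Finset α) := h ▸ by simp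
    grind
  rw [hset, Finset.card_filter, Finset.sum_insert (by simp [n1, n2, n3]),
    Finset.sum_insert (by simp [n4, n5]), Finset.sum_insert (by simp [n6]),
    Finset.sum_singleton] at h
  by_cases h1 : ({a, b, c} : Finset α) ∈ E <;> by_cases h2 : ({a, b, d} : Finset α) ∈ E <;>
    by_cases h3 : ({a, c, d} : Finset α) ∈ E <;> by_cases h4 : ({b, c, d} : Finset α) ∈ E <;>
    simp [h1, h2, h3, h4] at h ⊢

/-- Once `abc` is a non-edge and `bcd` an edge, `bcde` is a clique for every fifth vertex `e`: the
conditions on the five 4-subsets of `abcde` leave no other assignment. -/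
lemma five_vertices {α : Type*} [DecidableEq α] {E : Finset (Finset α)}
    (hE : ∀ e ∈ E, e.card = 3)
    (hS : ∀ S : Finset α, S.card = 4 →
      (E.filter (fun e => e ⊆ S)).card = 1 ∨ (E.filter (fun e => e ⊆ S)).card = 4)
    {a b c d e : α} (hab : a ≠ b) (hac : a ≠ c) (had : a ≠ d) (hae : a ≠ e) (hbc : b ≠ c)
    (hbd : b ≠ d) (hbe : b ≠ e) (hcd : c ≠ d) (hce : c ≠ e) (hde : d ≠ e)
    (habc : {a, b, c} ∉ E) (hbcd : {b, c, d} ∈ E) :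
    {b, c, e} ∈ E ∧ {b, d, e} ∈ E ∧ {c, d, e} ∈ E := by
  have h1 := four_vertices hE hS hab hac had hbc hbd hcd
  have h2 := four_vertices hE hS hab hac hae hbc hbe hce
  have h3 := four_vertices hE hS hab had hae hbd hbe hde
  have h4 := four_vertices hE hS hac had hae hcd hce hde
  have h5 := four_vertices hE hS hbc hbd hbe hcd hce hde
  grind only

/-- Given a non-edge `abc` and an edge `bcd`, the vertices other than `a` form a clique. The cases
in the proof are whether `b` and `c` belong to `T`. -/
lemma clique_of_nonedge {α : Type*} [DecidableEq α] {E : Finset (Finset α)}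
    (hE : ∀ e ∈ E, e.card = 3)
    (hS : ∀ S : Finset α, S.card = 4 →
      (E.filter (fun e => e ⊆ S)).card = 1 ∨ (E.filter (fun e => e ⊆ S)).card = 4)
    {a b c d : α} (hab : a ≠ b) (hac : a ≠ c) (had : a ≠ d) (hbc : b ≠ c)
    (hbd : b ≠ d) (hcd : c ≠ d) (habc : {a, b, c} ∉ E) (hbcd : {b, c, d} ∈ E)
    (T : Finset α) (haT : a ∉ T) (hT : T.card = 3) : T ∈ E := by
  have key1 : ∀ x, x ≠ a → x ≠ b → x ≠ c → {b, c, x} ∈ E := by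
    intro x hxa hxb hxc
    by_cases hxd : d = x
    · exact hxd ▸ hbcd
    · exact (five_vertices hE hS hab hac had hxa.symm hbc hbd hxb.symm hcd hxc.symm hxd
        habc hbcd).1
  have key2 : ∀ x y, x ≠ a → x ≠ b → x ≠ c → y ≠ a → y ≠ b → y ≠ c → x ≠ y →
      {b, x, y} ∈ E ∧ {c, x, y} ∈ E := by
    intro x y hxa hxb hxc hya hyb hyc hxy
    exact (five_vertices hE hS hab hac hxa.symm hya.symm hbc hxb.symm hyb.symm hxc.symm hyc.symm
      hxy habc (key1 x hxa hxb hxc)).2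
  by_cases hbT : b ∈ T
  · by_cases hcT : c ∈ T
    · have h1 : ((T.erase b).erase c).card = 1 := by grind
      obtain ⟨x, hx⟩ := Finset.card_eq_one.1 h1
      have hT' : T = {b, c, x} := by
        rw [← hx]; ext y; grind
      have : x ∈ (T.erase b).erase c := by simp [hx]
      rw [hT']
      apply key1 <;> grind
    · have h1 : (T.erase b).card = 2 := by grind
      obtain ⟨x, y, hxy, hx⟩ := Finset.card_eq_two.1 h1
      have hT' : T = {b, x, y} := by
        rw [← hx]; ext y; grind
      have : x ∈ T.erase b := by simp [hx]
      have : y ∈ T.erase b := by simp [hx]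
      rw [hT']
      refine (key2 x y ?_ ?_ ?_ ?_ ?_ ?_ hxy).1 <;> grind
  · by_cases hcT : c ∈ T
    · have h1 : (T.erase c).card = 2 := by grind
      obtain ⟨x, y, hxy, hx⟩ := Finset.card_eq_two.1 h1
      have hT' : T = {c, x, y} := by
        rw [← hx]; ext y; grind
      have : x ∈ T.erase c := by simp [hx]
      have : y ∈ T.erase c := by simp [hx]
      rw [hT']
      refine (key2 x y ?_ ?_ ?_ ?_ ?_ ?_ hxy).2 <;> grind
    · obtain ⟨x, y, z, hxy, hxz, hyz, rfl⟩ := Finset.card_eq_three.1 hT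
      simp only [Finset.mem_insert, Finset.mem_singleton, not_or] at haT hbT hcT
      have h1 := (key2 x y (by grind) (by grind) (by grind) (by grind) (by grind) (by grind) hxy).1
      have h2 := (key2 x z (by grind) (by grind) (by grind) (by grind) (by grind) (by grind) hxz).1
      have h3 := four_vertices hE hS hbT.1 hbT.2.1 hbT.2.2 hxy hxz hyz
      tauto


/-- For every `n ≥ 4`: every `n`-vertex 3-graph in which every 4-element vertex set spans
exactly 1 or exactly 4 edges has a homogeneous set of size at least `n - 1`; moreover there is
such a 3-graph all of whose homogeneous sets have size at most `n - 1`.  Hence the minimum of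
`h(H)` over all such `n`-vertex 3-graphs equals `n - 1`. -/
theorem stmt_8 (n : ℕ) (hn : 4 ≤ n) :
    (∀ E : Finset (Finset (Fin n)), (∀ e ∈ E, e.card = 3) →
      (∀ S : Finset (Fin n), S.card = 4 →
        (E.filter (fun e => e ⊆ S)).card = 1 ∨ (E.filter (fun e => e ⊆ S)).card = 4) →
      ∃ S : Finset (Fin n),
        ((∀ T ⊆ S, T.card = 3 → T ∈ E) ∨ (∀ T ⊆ S, T.card = 3 → T ∉ E)) ∧
        n - 1 ≤ S.card) ∧
    (∃ E : Finset (Finset (Fin n)), (∀ e ∈ E, e.card = 3) ∧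
      (∀ S : Finset (Fin n), S.card = 4 →
        (E.filter (fun e => e ⊆ S)).card = 1 ∨ (E.filter (fun e => e ⊆ S)).card = 4) ∧
      (∀ S : Finset (Fin n),
        ((∀ T ⊆ S, T.card = 3 → T ∈ E) ∨ (∀ T ⊆ S, T.card = 3 → T ∉ E)) →
        S.card ≤ n - 1)) := by
  classical
  constructor
  · intro E hE hS
    by_cases hall : ∀ T : Finset (Fin n), T.card = 3 → T ∈ E
    · exact ⟨Finset.univ, Or.inl fun T _ hT => hall T hT, by simp⟩
    push Not at hall
    obtain ⟨T, hT, hTE⟩ := hall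
    obtain ⟨a, b, c, hab, hac, hbc, rfl⟩ := Finset.card_eq_three.1 hT
    obtain ⟨d, hd⟩ : ∃ d, d ∉ ({a, b, c} : Finset (Fin n)) := by
      by_contra! h
      have := Finset.card_le_card (fun x _ => h x : (Finset.univ : Finset (Fin n)) ⊆ {a, b, c})
      rw [hT, Finset.card_univ, Fintype.card_fin] at this
      omega
    simp only [Finset.mem_insert, Finset.mem_singleton, not_or] at hd
    obtain ⟨hda, hdb, hdc⟩ := hd
    have h4 := four_vertices hE hS hab hac (Ne.symm hda) hbc (Ne.symm hdb) (Ne.symm hdc)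
    -- The vertex left out is the one of `a, b, c` missed by the edge through `d`.
    suffices h : ∃ v : Fin n, ∀ T : Finset (Fin n), v ∉ T → T.card = 3 → T ∈ E by
      obtain ⟨v, hv⟩ := h
      refine ⟨Finset.univ.erase v, Or.inl fun T hTs hT3 => hv T (fun hvT => ?_) hT3, by simp⟩
      simpa using hTs hvT
    have hbac : ({b, a, c} : Finset (Fin n)) = {a, b, c} := by ext y; grind
    have hcab : ({c, a, b} : Finset (Fin n)) = {a, b, c} := by ext y; grind
    have hedge : {a, b, d} ∈ E ∨ {a, c, d} ∈ E ∨ {b, c, d} ∈ E := by tauto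
    rcases hedge with h | h | h
    · exact ⟨c, clique_of_nonedge hE hS hac.symm hbc.symm (Ne.symm hdc) hab (Ne.symm hda)
        (Ne.symm hdb) (hcab ▸ hTE) h⟩
    · exact ⟨b, clique_of_nonedge hE hS hab.symm hbc (Ne.symm hdb) hac (Ne.symm hda)
        (Ne.symm hdc) (hbac ▸ hTE) h⟩
    · exact ⟨a, clique_of_nonedge hE hS hab hac (Ne.symm hda) hbc (Ne.symm hdb)
        (Ne.symm hdc) hTE h⟩
  · let v : Fin n := ⟨0, by omega⟩
    refine ⟨Finset.powersetCard 3 (Finset.univ.erase v), ?_, ?_, ?_⟩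
    · intro e he
      exact (Finset.mem_powersetCard.1 he).2
    · intro S hS
      have hfil : (Finset.powersetCard 3 (Finset.univ.erase v)).filter (fun e => e ⊆ S) =
          Finset.powersetCard 3 (S.erase v) := by
        ext e
        simp only [Finset.mem_filter, Finset.mem_powersetCard, Finset.subset_erase,
          Finset.subset_univ, true_and]
        tauto
      rw [hfil, Finset.card_powersetCard]
      by_cases hv : v ∈ S
      · left
        rw [Finset.card_erase_of_mem hv, hS]
        rfl
      · right
        rw [Finset.erase_eq_of_notMem hv, hS]
        rfl
    · intro S hom
      by_contra! hlt
      have hSu : S = Finset.univ := by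
        apply Finset.eq_univ_of_card
        have := Finset.card_le_univ S
        rw [Fintype.card_fin] at this ⊢
        omega
      subst hSu
      have hcard : ((Finset.univ : Finset (Fin n)).erase v).card = n - 1 := by simp
      rcases hom with h | h
      · obtain ⟨T, hvT, -, hT⟩ := Finset.exists_subsuperset_card_eq
          (Finset.subset_univ ({v} : Finset (Fin n))) (n := 3) (by simp) (by simp; omega)
        have := (Finset.mem_powersetCard.1 (h T (Finset.subset_univ _) hT)).1
          (hvT (Finset.mem_singleton_self v))
        simp at this
      · obtain ⟨T, hTs, hT⟩ := Finset.exists_subset_card_eq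
          (s := (Finset.univ : Finset (Fin n)).erase v) (n := 3) (by omega)
        exact h T (Finset.subset_univ _) hT (Finset.mem_powersetCard.2 ⟨hTs, hT⟩)
end

section
/- Every 3-graph on n ≥ 4 vertices in which every 4-element vertex set spans exactly 1 or exactly 4 edges is either complete (every 3-element vertex subset is an edge), or consists of a complete 3-graph on n − 1 vertices together with one additional vertex contained in no edge. -/
/-!
If some triple `T` is a non-edge, adding a fourth vertex gives a 4-set that is not complete, hence
spans exactly one edge; let `c` be the vertex of that 4-set missing from its edge `{a, b, d}`.
Then `c` is the isolated vertex:

* For a further vertex `x`, the 4-set `{a, b, d, x}` contains all or none of `abx, adx, bdx`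
  as edges. If none, then `cabx, cadx, cbdx` force exactly one edge in each pair from
  `cax, cbx, cdx`, which is impossible by parity. So all of them are edges, and `cax, cbx, cdx`
  are non-edges.
* For two further vertices `x, y`, the 4-set `{a, b, x, y}` has the edges `abx, aby`, so it is
  complete; then `{c, a, x, y}` has the edge `axy`, and `cxy` is a non-edge.
* A triple `xyz` avoiding `c` is an edge, since it is the only possible edge in `{c, x, y, z}`.
-/

/-- The counting hypothesis on the 4-set `{a, b, c, d}`, spelled out on its four triples. -/
lemma four_set_cases {V : Type*} [DecidableEq V] (E : Finset (Finset V))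
    (hE : ∀ e ∈ E, e.card = 3)
    (h : ∀ S : Finset V, S.card = 4 →
      (E.filter (fun e => e ⊆ S)).card = 1 ∨ (E.filter (fun e => e ⊆ S)).card = 4)
    (a b c d : V) (hab : a ≠ b) (hac : a ≠ c) (had : a ≠ d) (hbc : b ≠ c) (hbd : b ≠ d)
    (hcd : c ≠ d) :
    ({a, b, c} ∈ E ∧ {a, b, d} ∈ E ∧ {a, c, d} ∈ E ∧ {b, c, d} ∈ E) ∨
    ({a, b, c} ∈ E ∧ {a, b, d} ∉ E ∧ {a, c, d} ∉ E ∧ {b, c, d} ∉ E) ∨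
    ({a, b, c} ∉ E ∧ {a, b, d} ∈ E ∧ {a, c, d} ∉ E ∧ {b, c, d} ∉ E) ∨
    ({a, b, c} ∉ E ∧ {a, b, d} ∉ E ∧ {a, c, d} ∈ E ∧ {b, c, d} ∉ E) ∨
    ({a, b, c} ∉ E ∧ {a, b, d} ∉ E ∧ {a, c, d} ∉ E ∧ {b, c, d} ∈ E) := by
  have hS : ({a, b, c, d} : Finset V).card = 4 := by
    simp [hab, hac, had, hbc, hbd, hcd]
  have key : E.filter (fun e => e ⊆ {a, b, c, d}) =
      ({{a, b, c}, {a, b, d}, {a, c, d}, {b, c, d}} : Finset (Finset V)).filter (· ∈ E) := by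
    ext e
    simp only [Finset.mem_filter, Finset.mem_insert, Finset.mem_singleton]
    constructor
    · rintro ⟨he, hs⟩
      refine ⟨?_, he⟩
      -- A 3-subset of the 4-set omits exactly one of its elements.
      obtain ⟨x, hx⟩ : ∃ x, ({a, b, c, d} : Finset V) \ e = {x} := by
        rw [← Finset.card_eq_one, Finset.card_sdiff_of_subset hs, hS, hE e he]
      have he' : e = ({a, b, c, d} : Finset V).erase x := by
        rw [← Finset.sdiff_singleton_eq_erase, ← hx, Finset.sdiff_sdiff_eq_self hs]
      have hx' : x ∈ ({a, b, c, d} : Finset V) := by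
        have : x ∈ ({a, b, c, d} : Finset V) \ e := by simp [hx]
        exact (Finset.mem_sdiff.1 this).1
      simp only [Finset.mem_insert, Finset.mem_singleton] at hx'
      rcases hx' with rfl | rfl | rfl | rfl
      · right; right; right; rw [he']; ext y; simp; grind
      · right; right; left; rw [he']; ext y; simp; grind
      · right; left; rw [he']; ext y; simp; grind
      · left; rw [he']; ext y; simp; grind
    · rintro ⟨he, heE⟩
      refine ⟨heE, ?_⟩
      rcases he with rfl | rfl | rfl | rfl <;> intro y <;> simp <;> grind
  have n1 : ({a, b, c} : Finset V) ≠ {a, b, d} := fun hh => by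
    have := Finset.ext_iff.1 hh d; simp at this; grind
  have n2 : ({a, b, c} : Finset V) ≠ {a, c, d} := fun hh => by
    have := Finset.ext_iff.1 hh d; simp at this; grind
  have n3 : ({a, b, c} : Finset V) ≠ {b, c, d} := fun hh => by
    have := Finset.ext_iff.1 hh d; simp at this; grind
  have n4 : ({a, b, d} : Finset V) ≠ {a, c, d} := fun hh => by
    have := Finset.ext_iff.1 hh c; simp at this; grind
  have n5 : ({a, b, d} : Finset V) ≠ {b, c, d} := fun hh => by
    have := Finset.ext_iff.1 hh c; simp at this; grind
  have n6 : ({a, c, d} : Finset V) ≠ {b, c, d} := fun hh => by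
    have := Finset.ext_iff.1 hh b; simp at this; grind
  have hc := h _ hS
  rw [key] at hc
  by_cases h1 : ({a, b, c} : Finset V) ∈ E <;> by_cases h2 : ({a, b, d} : Finset V) ∈ E <;>
    by_cases h3 : ({a, c, d} : Finset V) ∈ E <;> by_cases h4 : ({b, c, d} : Finset V) ∈ E <;>
    simp [Finset.filter_insert, Finset.filter_singleton, h1, h2, h3, h4, n1, n2, n3, n4, n5, n6]
      at hc ⊢

/-- If `{c, a, b, d}` has no edge through `c`, then `c` is isolated and all other triples are
edges. -/
lemma isolated_of_four_set {V : Type*} [DecidableEq V] (E : Finset (Finset V))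
    (hE : ∀ e ∈ E, e.card = 3)
    (h : ∀ S : Finset V, S.card = 4 →
      (E.filter (fun e => e ⊆ S)).card = 1 ∨ (E.filter (fun e => e ⊆ S)).card = 4)
    (c a b d : V) (hca : c ≠ a) (hcb : c ≠ b) (hcd : c ≠ d) (hab : a ≠ b) (had : a ≠ d)
    (hbd : b ≠ d) (h1 : {c, a, b} ∉ E) (h2 : {c, a, d} ∉ E) (h3 : {c, b, d} ∉ E) :
    ∀ T : Finset V, T.card = 3 → (T ∈ E ↔ c ∉ T) := by
  have F := four_set_cases E hE h
  have habd : {a, b, d} ∈ E := by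
    have := F c a b d hca hcb hcd hab had hbd
    tauto
  have step : ∀ x, x ≠ c → x ≠ a → x ≠ b → x ≠ d →
      {c, a, x} ∉ E ∧ {c, b, x} ∉ E ∧ {c, d, x} ∉ E ∧ {a, b, x} ∈ E := by
    intro x xc xa xb xd
    have f1 := F c a b x hca hcb xc.symm hab xa.symm xb.symm
    have f2 := F c a d x hca hcd xc.symm had xa.symm xd.symm
    have f3 := F c b d x hcb hcd xc.symm hbd xb.symm xd.symm
    have f4 := F a b d x hab had xa.symm hbd xb.symm xd.symm
    grind only
  have swap : ∀ x y : V, ({c, x, y} : Finset V) = {c, y, x} := fun x y => by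
    rw [Finset.pair_comm]
  have link : ∀ x y, x ≠ c → y ≠ c → x ≠ y → {c, x, y} ∉ E := by
    intro x y xc yc xy
    by_cases hx : x = a ∨ x = b ∨ x = d
    · by_cases hy : y = a ∨ y = b ∨ y = d
      · rcases hx with rfl | rfl | rfl <;> rcases hy with rfl | rfl | rfl <;>
          first
          | exact absurd rfl xy
          | assumption
          | (rw [swap]; assumption)
      · push Not at hy
        have := step y yc hy.1 hy.2.1 hy.2.2
        rcases hx with rfl | rfl | rfl <;> tauto
    · push Not at hx
      have sx := step x xc hx.1 hx.2.1 hx.2.2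
      by_cases hy : y = a ∨ y = b ∨ y = d
      · rw [swap]
        rcases hy with rfl | rfl | rfl <;> tauto
      · push Not at hy
        have sy := step y yc hy.1 hy.2.1 hy.2.2
        have f1 := F a b x y hab hx.1.symm hy.1.symm hx.2.1.symm hy.2.1.symm xy
        have f2 := F c a x y hca xc.symm yc.symm hx.1.symm hy.1.symm xy
        tauto
  intro T hT
  constructor
  · intro hTE hcT
    obtain ⟨x, y, xy, hxy⟩ := Finset.card_eq_two.1
      (show (T.erase c).card = 2 by rw [Finset.card_erase_of_mem hcT, hT])
    have hTc : T = {c, x, y} := by rw [← hxy, Finset.insert_erase hcT]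
    have hx : x ∈ T.erase c := by simp [hxy]
    have hy : y ∈ T.erase c := by simp [hxy]
    exact link x y (Finset.ne_of_mem_erase hx) (Finset.ne_of_mem_erase hy) xy (hTc ▸ hTE)
  · intro hcT
    obtain ⟨x, y, z, xy, xz, yz, rfl⟩ := Finset.card_eq_three.1 hT
    simp only [Finset.mem_insert, Finset.mem_singleton, not_or] at hcT
    obtain ⟨cx, cy, cz⟩ := hcT
    have l1 := link x y (Ne.symm cx) (Ne.symm cy) xy
    have l2 := link x z (Ne.symm cx) (Ne.symm cz) xz
    have l3 := link y z (Ne.symm cy) (Ne.symm cz) yz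
    have f := F c x y z cx cy cz xy xz yz
    tauto

/-- Every 3-graph on `n ≥ 4` vertices in which every 4-element vertex set spans exactly 1 or
exactly 4 edges is either complete, or consists of a complete 3-graph on `n - 1` vertices
together with one additional vertex contained in no edge. -/
theorem stmt_9 (n : ℕ) (hn : 4 ≤ n) (E : Finset (Finset (Fin n)))
    (hE : ∀ e ∈ E, e.card = 3)
    (h : ∀ S : Finset (Fin n), S.card = 4 →
      (E.filter (fun e => e ⊆ S)).card = 1 ∨ (E.filter (fun e => e ⊆ S)).card = 4) :
    (∀ T : Finset (Fin n), T.card = 3 → T ∈ E) ∨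
      (∃ v : Fin n, ∀ T : Finset (Fin n), T.card = 3 → (T ∈ E ↔ v ∉ T)) := by
  refine or_iff_not_imp_left.2 fun hne => ?_
  push Not at hne
  obtain ⟨T, hT, hTE⟩ := hne
  obtain ⟨w, hw⟩ : ∃ w, w ∉ T := by
    by_contra! hall
    have := Finset.card_le_card (show Finset.univ ⊆ T from fun x _ => hall x)
    rw [Finset.card_univ, Fintype.card_fin] at this
    omega
  obtain ⟨p, q, r, pq, pr, qr, rfl⟩ := Finset.card_eq_three.1 hT
  simp only [Finset.mem_insert, Finset.mem_singleton, not_or] at hw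
  obtain ⟨wp, wq, wr⟩ := hw
  have core := isolated_of_four_set E hE h
  have s1 : ({q, p, r} : Finset (Fin n)) = {p, q, r} := Finset.insert_comm _ _ _
  have s2 : ({q, p, w} : Finset (Fin n)) = {p, q, w} := Finset.insert_comm _ _ _
  have s3 : ({r, p, q} : Finset (Fin n)) = {p, q, r} := by
    rw [Finset.insert_comm, Finset.pair_comm]
  have s4 : ({r, p, w} : Finset (Fin n)) = {p, r, w} := Finset.insert_comm _ _ _
  have s5 : ({r, q, w} : Finset (Fin n)) = {q, r, w} := Finset.insert_comm _ _ _
  -- The isolated vertex is the one opposite the unique edge of `{p, q, r, w}`.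
  rcases four_set_cases E hE h p q r w pq pr (Ne.symm wp) qr (Ne.symm wq) (Ne.symm wr) with
    ⟨e1, -⟩ | ⟨e1, -⟩ | ⟨-, -, e3, e4⟩ | ⟨-, e2, -, e4⟩ | ⟨-, e2, e3, -⟩
  · exact absurd e1 hTE
  · exact absurd e1 hTE
  · exact ⟨r, core r p q w pr.symm qr.symm (Ne.symm wr) pq (Ne.symm wp) (Ne.symm wq)
      (s3 ▸ hTE) (s4 ▸ e3) (s5 ▸ e4)⟩
  · exact ⟨q, core q p r w pq.symm qr (Ne.symm wq) pr (Ne.symm wp) (Ne.symm wr)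
      (s1 ▸ hTE) (s2 ▸ e2) e4⟩
  · exact ⟨p, core p q r w pq pr (Ne.symm wp) qr (Ne.symm wq) (Ne.symm wr) hTE e2 e3⟩
end

section
/- For every n ≥ 4, the minimum of h(H) over all n-vertex 3-graphs H in which every 4-element vertex set spans exactly 2 or exactly 4 edges (i.e., H is (4,0)-free, (4,1)-free and (4,3)-free) equals n/2 if n ≡ 0 (mod 6), and equals ⌈(n+1)/2⌉ otherwise. -/
/-!
Call a triple *odd* when it is not an edge of `H`.  That every 4-set spans 2 or 4 edges says that
the odd triples form a two-graph (every 4-set contains an even number of them) in which no 4-set has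
all its triples odd.  A two-graph is represented by a graph `A`: a triple is odd iff it
contains an odd number of edges of `A`, and `A` can be chosen with a prescribed isolated vertex `v`.
The no-four-odd condition makes `A` triangle-free and free of induced `2K₂`.

*Lower bound* (`exists_large_even`).  If `A` contains no 5-cycle, then `A` is bipartite
(`bipartite_of_no_pentagon`), and adding `v` to the larger of the two independent sets gives a
clique of `H` with at least `(n + 1) / 2` elements.  If `A` contains a 5-cycle, then
`A` is a blow-up of that cycle together with isolated vertices, so the two-graph is a blow-up of
the two-graph on six points whose ten odd triples form a `2-(6,3,2)` design.  The ten unions of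
three classes over the even triples are cliques, each class lies in five of them, so their average
size is `n / 2`; all of them can have size at most `n / 2` only if the six classes are
equally large, which forces `6 ∣ n` (`exists_large_even_of_pentagon`).

*Upper bound.*  For `6 ∣ n` the balanced blow-up of the six-point two-graph works
(`blowup_bound`).  Otherwise place the vertices at `n` of the vertices of a regular
`(2 * (n / 2) + 1)`-gon and call a triple odd iff it contains the centre; in terms of `A`, vertices
are adjacent iff their indices differ by more than `n / 2` (`circle_bound`).
-/

/-- The triple `a, b, c` contains an odd number of edges of `A`: a chain of two biconditionals
holds exactly when one or all three of the propositions hold. -/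
def OddTriple {V : Type*} (A : V → V → Prop) (a b c : V) : Prop :=
  A a b ↔ (A b c ↔ A a c)

/-- Every edge of a 4-set lies in two of its triples, so the number of odd triples is even. -/
theorem oddTriple_parity {V : Type*} (A : V → V → Prop) (a b c d : V) :
    (OddTriple A a b c ↔ OddTriple A a b d) ↔ (OddTriple A a c d ↔ OddTriple A b c d) := by
  unfold OddTriple
  by_cases A a b <;> by_cases A a c <;> by_cases A a d <;> by_cases A b c <;>
    by_cases A b d <;> by_cases A c d <;> simp [*]

/-! ### Edges inside a 4-set -/

theorem card_filter_four {n : ℕ} (E : Finset (Finset (Fin n))) (hE : ∀ e ∈ E, e.card = 3)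
    {a b c d : Fin n} (hab : a ≠ b) (hac : a ≠ c) (had : a ≠ d) (hbc : b ≠ c) (hbd : b ≠ d)
    (hcd : c ≠ d) :
    (E.filter (fun e => e ⊆ {a, b, c, d})).card =
      (if ({a, b, c} : Finset (Fin n)) ∈ E then 1 else 0) +
      (if ({a, b, d} : Finset (Fin n)) ∈ E then 1 else 0) +
      (if ({a, c, d} : Finset (Fin n)) ∈ E then 1 else 0) +
      (if ({b, c, d} : Finset (Fin n)) ∈ E then 1 else 0) := by
  have hp : E.filter (fun e => e ⊆ {a, b, c, d}) =
      (({{a, b, c}, {a, b, d}, {a, c, d}, {b, c, d}} : Finset (Finset (Fin n)))).filter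
        (fun e => e ∈ E) := by
    ext e
    simp only [Finset.mem_filter, Finset.mem_insert, Finset.mem_singleton]
    constructor
    · rintro ⟨he, hs⟩
      refine ⟨?_, he⟩
      have h3 := hE e he
      -- a 3-subset of a 4-set is the 4-set with one element erased
      have h4 : ({a, b, c, d} : Finset (Fin n)).card = 4 := by
        simp [*]
      have h1 : (({a, b, c, d} : Finset (Fin n)) \ e).card = 1 := by
        rw [Finset.card_sdiff_of_subset hs]; omega
      obtain ⟨x, hx⟩ := Finset.card_eq_one.mp h1
      have hx' : ∀ y, (y ∈ ({a, b, c, d} : Finset (Fin n)) ∧ y ∉ e) ↔ y = x := by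
        intro y
        rw [← Finset.mem_sdiff, hx, Finset.mem_singleton]
      have he' : ∀ y, y ∈ e ↔ y ∈ ({a, b, c, d} : Finset (Fin n)) ∧ y ≠ x := by
        intro y
        have := hx' y
        have := @hs y
        tauto
      have hxm := ((hx' x).2 rfl).1
      simp only [Finset.mem_insert, Finset.mem_singleton] at hxm
      rcases hxm with rfl | rfl | rfl | rfl
      · right; right; right; ext y; rw [he']; simp; grind
      · right; right; left; ext y; rw [he']; simp; grind
      · right; left; ext y; rw [he']; simp; grind
      · left; ext y; rw [he']; simp; grind
    · rintro ⟨h, he⟩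
      refine ⟨he, ?_⟩
      rcases h with rfl | rfl | rfl | rfl <;> intro y <;> simp <;> tauto
  have ne : ∀ (s t : Finset (Fin n)) (x : Fin n), x ∈ s → x ∉ t → s ≠ t := by
    rintro s t x h1 h2 rfl
    exact h2 h1
  have e1 : ({a, b, c} : Finset (Fin n)) ∉
      ({{a, b, d}, {a, c, d}, {b, c, d}} : Finset (Finset (Fin n))) := by
    simp only [Finset.mem_insert, Finset.mem_singleton, not_or]
    exact ⟨ne _ _ c (by simp) (by grind), ne _ _ b (by simp) (by grind),
      ne _ _ a (by simp) (by grind)⟩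
  have e2 : ({a, b, d} : Finset (Fin n)) ∉
      ({{a, c, d}, {b, c, d}} : Finset (Finset (Fin n))) := by
    simp only [Finset.mem_insert, Finset.mem_singleton, not_or]
    exact ⟨ne _ _ b (by simp) (by grind), ne _ _ a (by simp) (by grind)⟩
  have e3 : ({a, c, d} : Finset (Fin n)) ∉ ({{b, c, d}} : Finset (Finset (Fin n))) := by
    simp only [Finset.mem_singleton]
    exact ne _ _ a (by simp) (by grind)
  rw [hp, Finset.card_filter, Finset.sum_insert e1, Finset.sum_insert e2, Finset.sum_insert e3,
    Finset.sum_singleton]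
  ring

/-! ### Lower bound -/

/-- A graph without triangles, induced `2K₂` and 5-cycles is bipartite. Given an edge `a b`, the
vertices adjacent to neither `a` nor `b` form an independent set, and none of them can have
neighbours in both `N(a)` and `N(b)`. -/
theorem bipartite_of_no_pentagon {n : ℕ} (A : Fin n → Fin n → Prop) (hs : ∀ x y, A x y → A y x)
    (tf : ∀ a b c, A a b → A b c → A a c → False)
    (tk : ∀ a b c d, A a b → A c d → ¬ A a c → ¬ A a d → ¬ A b c → ¬ A b d → False)
    (h5 : ∀ a b c d e, A a b → A b c → A c d → A d e → A e a → False) :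
    ∃ p : Fin n → Prop, ∀ x y, A x y → (p x ↔ ¬ p y) := by
  by_cases h : ∃ a b, A a b
  · obtain ⟨a, b, hab⟩ := h
    refine ⟨fun x => A a x ∨ (¬ A b x ∧ ∀ y, A a y → ¬ A x y), ?_⟩
    intro x y hxy
    have hba := hs _ _ hab
    have key : ∀ w y z, A a y → A b z → A w y → A w z → False := fun w y z h1 h2 h3 h4 =>
      h5 a y w z b h1 (hs _ _ h3) h4 (hs _ _ h2) hba
    -- no two vertices of the first part are adjacent
    have half : ∀ x y, A x y → (A a x ∨ (¬ A b x ∧ ∀ y, A a y → ¬ A x y)) →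
        ¬ (A a y ∨ (¬ A b y ∧ ∀ z, A a z → ¬ A y z)) := by
      rintro x y hxy (hx | ⟨hx, hx'⟩) (hy | ⟨hy, hy'⟩)
      · exact tf a x y hx hxy hy
      · exact hy' x hx (hs _ _ hxy)
      · exact hx' y hy hxy
      · by_cases hax : A a x
        · exact hy' x hax (hs _ _ hxy)
        · by_cases hay : A a y
          · exact hx' y hay hxy
          · exact tk a b x y hab hxy hax hay hx hy
    refine ⟨half x y hxy, fun hy => ?_⟩
    by_contra hx
    push Not at hx hy
    by_cases hbx : A b x
    · by_cases hby : A b y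
      · exact tf b x y hbx hxy hby
      · obtain ⟨z, hz, hyz⟩ := hy.2 hby
        exact key y z x hz hbx hyz (hs _ _ hxy)
    · obtain ⟨z, hz, hxz⟩ := hx.2 hbx
      by_cases hby : A b y
      · exact key x z y hz hby hxz hxy
      · exact tk a b x y hab hxy hx.1 hy.1 hbx hby
  · exact ⟨fun _ => True, fun x y hxy => (h ⟨x, y, hxy⟩).elim⟩

theorem exists_large_even_of_bipartite {n : ℕ} (A : Fin n → Fin n → Prop) (v : Fin n)
    (hv : ∀ x, ¬ A v x) (hv' : ∀ x, ¬ A x v)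
    (p : Fin n → Prop) (hp : ∀ x y, A x y → (p x ↔ ¬ p y)) :
    ∃ S : Finset (Fin n), (∀ a ∈ S, ∀ b ∈ S, ∀ c ∈ S, ¬ OddTriple A a b c) ∧
      (n + 2) / 2 ≤ S.card := by
  classical
  set P : Finset (Fin n) := Finset.univ.filter (fun x => x = v ∨ p x) with hP
  set Q : Finset (Fin n) := Finset.univ.filter (fun x => x = v ∨ ¬ p x) with hQ
  have hun : P ∪ Q = Finset.univ := by
    ext x; simp [hP, hQ]; tauto
  have hin : 1 ≤ (P ∩ Q).card := Finset.card_pos.mpr ⟨v, by simp [hP, hQ]⟩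
  have hc := Finset.card_union_add_card_inter P Q
  rw [hun, Finset.card_univ, Fintype.card_fin] at hc
  have hPi : ∀ a ∈ P, ∀ b ∈ P, ¬ A a b := by
    intro a ha b hb hab
    simp only [hP, Finset.mem_filter, Finset.mem_univ, true_and] at ha hb
    grind
  have hQi : ∀ a ∈ Q, ∀ b ∈ Q, ¬ A a b := by
    intro a ha b hb hab
    simp only [hQ, Finset.mem_filter, Finset.mem_univ, true_and] at ha hb
    grind
  rcases le_total Q.card P.card with h | h
  · refine ⟨P, fun a ha b hb c hc => ?_, by omega⟩
    simp [OddTriple, hPi a ha b hb, hPi b hb c hc, hPi a ha c hc]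
  · refine ⟨Q, fun a ha b hb c hc => ?_, by omega⟩
    simp [OddTriple, hQi a ha b hb, hQi b hb c hc, hQi a ha c hc]

/-- The six-point two-graph, as a graph: the pentagon `0 1 2 3 4` and the isolated vertex `5`. -/
def pent (r s : Fin 6) : Prop :=
  r ≠ 5 ∧ s ≠ 5 ∧ ((r.val + 1) % 5 = s.val ∨ (s.val + 1) % 5 = r.val)

instance : DecidableRel pent := fun r s => by unfold pent; infer_instance

instance (r s t : Fin 6) : Decidable (OddTriple pent r s t) := by
  unfold OddTriple; infer_instance

/-- Repetitions are allowed here, so this also covers triples within a class of a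
blow-up: the union of three classes
that form an even triple is a clique. -/
theorem pent_even_of_mem : ∀ i j k : Fin 6, i ≠ j → j ≠ k → i ≠ k → ¬ OddTriple pent i j k →
    ∀ a b c : Fin 6, (a = i ∨ a = j ∨ a = k) → (b = i ∨ b = j ∨ b = k) →
      (c = i ∨ c = j ∨ c = k) → ¬ OddTriple pent a b c := by
  decide

/-- A graph that is a blow-up (with possibly empty classes) of `pent` has a large clique of even
triples, by averaging over the ten even triples of classes. -/
theorem exists_large_even_of_blowup {n : ℕ} (A : Fin n → Fin n → Prop) (f : Fin n → Fin 6)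
    (hf : ∀ x y, A x y ↔ pent (f x) (f y)) :
    ∃ S : Finset (Fin n), (∀ a ∈ S, ∀ b ∈ S, ∀ c ∈ S, ¬ OddTriple A a b c) ∧
      (if n % 6 = 0 then n / 2 else (n + 2) / 2) ≤ S.card := by
  classical
  by_contra hcon
  push Not at hcon
  set w : Fin 6 → ℕ := fun i => (Finset.univ.filter (fun x => f x = i)).card with hw
  have hsum : n = w 0 + w 1 + w 2 + w 3 + w 4 + w 5 := by
    have h := Finset.card_eq_sum_card_fiberwise (f := f) (s := Finset.univ) (t := Finset.univ)
      (by simp)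
    rw [Finset.card_univ, Fintype.card_fin] at h
    rw [h, Fin.sum_univ_six]
  have hlt : ∀ i j k : Fin 6, i ≠ j → j ≠ k → i ≠ k → ¬ OddTriple pent i j k →
      w i + w j + w k < (if n % 6 = 0 then n / 2 else (n + 2) / 2) := by
    intro i j k hij hjk hik ho
    have h := hcon (Finset.univ.filter (fun x => f x = i ∨ f x = j ∨ f x = k)) (by
      intro a ha b hb c hc
      simp only [Finset.mem_filter, Finset.mem_univ, true_and] at ha hb hc
      have := pent_even_of_mem i j k hij hjk hik ho _ _ _ ha hb hc
      simpa [OddTriple, hf] using this)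
    have hcard : (Finset.univ.filter (fun x => f x = i ∨ f x = j ∨ f x = k)).card =
        w i + w j + w k := by
      rw [Finset.filter_or, Finset.filter_or, Finset.card_union_of_disjoint,
        Finset.card_union_of_disjoint, add_assoc]
      · rw [Finset.disjoint_left]; intro x; simp; grind
      · rw [Finset.disjoint_left]; intro x; simp; grind
    rw [hcard] at h
    exact h
  have h1 := hlt 0 1 2 (by decide) (by decide) (by decide) (by decide)
  have h2 := hlt 1 2 3 (by decide) (by decide) (by decide) (by decide)
  have h3 := hlt 2 3 4 (by decide) (by decide) (by decide) (by decide)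
  have h4 := hlt 3 4 0 (by decide) (by decide) (by decide) (by decide)
  have h5 := hlt 4 0 1 (by decide) (by decide) (by decide) (by decide)
  have h6 := hlt 0 2 5 (by decide) (by decide) (by decide) (by decide)
  have h7 := hlt 1 3 5 (by decide) (by decide) (by decide) (by decide)
  have h8 := hlt 2 4 5 (by decide) (by decide) (by decide) (by decide)
  have h9 := hlt 3 0 5 (by decide) (by decide) (by decide) (by decide)
  have h10 := hlt 4 1 5 (by decide) (by decide) (by decide) (by decide)
  split_ifs at * <;> omega

/-- A triangle-free graph without induced `2K₂` that contains a 5-cycle is a blow-up of `pent`: a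
vertex with no neighbour on the cycle is isolated, every other vertex has the same two neighbours on
the cycle as some vertex of the cycle, and vertices of consecutive classes are adjacent. -/
theorem exists_large_even_of_pentagon {n : ℕ} (A : Fin n → Fin n → Prop)
    (hs : ∀ x y, A x y → A y x)
    (tf : ∀ a b c, A a b → A b c → A a c → False)
    (tk : ∀ a b c d, A a b → A c d → ¬ A a c → ¬ A a d → ¬ A b c → ¬ A b d → False)
    {a b c d e : Fin n} (h1 : A a b) (h2 : A b c) (h3 : A c d) (h4 : A d e) (h5 : A e a) :
    ∃ S : Finset (Fin n), (∀ a ∈ S, ∀ b ∈ S, ∀ c ∈ S, ¬ OddTriple A a b c) ∧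
      (if n % 6 = 0 then n / 2 else (n + 2) / 2) ≤ S.card := by
  have nac : ¬ A a c := fun h => tf a b c h1 h2 h
  have nbd : ¬ A b d := fun h => tf b c d h2 h3 h
  have nce : ¬ A c e := fun h => tf c d e h3 h4 h
  have nda : ¬ A d a := fun h => tf d e a h4 h5 h
  have neb : ¬ A e b := fun h => tf e a b h5 h1 h
  -- the possible neighbourhoods of a vertex on the cycle
  have cls : ∀ x,
      (¬ A x a ∧ A x b ∧ ¬ A x c ∧ ¬ A x d ∧ A x e) ∨
      (A x a ∧ ¬ A x b ∧ A x c ∧ ¬ A x d ∧ ¬ A x e) ∨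
      (¬ A x a ∧ A x b ∧ ¬ A x c ∧ A x d ∧ ¬ A x e) ∨
      (¬ A x a ∧ ¬ A x b ∧ A x c ∧ ¬ A x d ∧ A x e) ∨
      (A x a ∧ ¬ A x b ∧ ¬ A x c ∧ A x d ∧ ¬ A x e) ∨
      (∀ y, ¬ A x y) := by
    intro x
    have t1 : ¬ (A x a ∧ A x b) := fun h => tf x a b h.1 h1 h.2
    have t2 : ¬ (A x b ∧ A x c) := fun h => tf x b c h.1 h2 h.2
    have t3 : ¬ (A x c ∧ A x d) := fun h => tf x c d h.1 h3 h.2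
    have t4 : ¬ (A x d ∧ A x e) := fun h => tf x d e h.1 h4 h.2
    have t5 : ¬ (A x e ∧ A x a) := fun h => tf x e a h.1 h5 h.2
    -- a vertex with a neighbour on the cycle also sees the edge opposite to that neighbour
    have o1 : A x a → A x c ∨ A x d := fun h => by
      by_contra hn; push Not at hn
      exact tk x a c d h h3 hn.1 hn.2 nac (fun h => nda (hs _ _ h))
    have o2 : A x b → A x d ∨ A x e := fun h => by
      by_contra hn; push Not at hn
      exact tk x b d e h h4 hn.1 hn.2 nbd (fun h => neb (hs _ _ h))
    have o3 : A x c → A x e ∨ A x a := fun h => by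
      by_contra hn; push Not at hn
      exact tk x c e a h h5 hn.1 hn.2 nce (fun h => nac (hs _ _ h))
    have o4 : A x d → A x a ∨ A x b := fun h => by
      by_contra hn; push Not at hn
      exact tk x d a b h h1 hn.1 hn.2 nda (fun h => nbd (hs _ _ h))
    have o5 : A x e → A x b ∨ A x c := fun h => by
      by_contra hn; push Not at hn
      exact tk x e b c h h2 hn.1 hn.2 neb (fun h => nce (hs _ _ h))
    have iso : ¬ A x a → ¬ A x b → ¬ A x c → ¬ A x d → ¬ A x e → ∀ y, ¬ A x y := by
      intro ha hb hc hd he y hxy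
      -- the neighbours of `y` on the cycle would be an independent vertex cover of a 5-cycle
      have c1 : A y a ∨ A y b := by
        by_contra hn; push Not at hn; exact tk x y a b hxy h1 ha hb hn.1 hn.2
      have c2 : A y b ∨ A y c := by
        by_contra hn; push Not at hn; exact tk x y b c hxy h2 hb hc hn.1 hn.2
      have c3 : A y c ∨ A y d := by
        by_contra hn; push Not at hn; exact tk x y c d hxy h3 hc hd hn.1 hn.2
      have c4 : A y d ∨ A y e := by
        by_contra hn; push Not at hn; exact tk x y d e hxy h4 hd he hn.1 hn.2
      have c5 : A y e ∨ A y a := by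
        by_contra hn; push Not at hn; exact tk x y e a hxy h5 he ha hn.1 hn.2
      have u1 : ¬ (A y a ∧ A y b) := fun h => tf y a b h.1 h1 h.2
      have u2 : ¬ (A y b ∧ A y c) := fun h => tf y b c h.1 h2 h.2
      have u3 : ¬ (A y c ∧ A y d) := fun h => tf y c d h.1 h3 h.2
      have u4 : ¬ (A y d ∧ A y e) := fun h => tf y d e h.1 h4 h.2
      have u5 : ¬ (A y e ∧ A y a) := fun h => tf y e a h.1 h5 h.2
      rcases c1 with h | h
      · rcases c4 with h' | h'
        · exact c2.elim (fun q => u1 ⟨h, q⟩) (fun q => u3 ⟨q, h'⟩)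
        · exact u5 ⟨h', h⟩
      · rcases c5 with h' | h'
        · exact c3.elim (fun q => u2 ⟨h, q⟩) (fun q => u4 ⟨q, h'⟩)
        · exact u1 ⟨h', h⟩
    clear tf tk hs h1 h2 h3 h4 h5 nac nbd nce nda neb
    grind
  have ex : ∀ x, ∃ i : Fin 6,
      (i = 0 ∧ ¬ A x a ∧ A x b ∧ ¬ A x c ∧ ¬ A x d ∧ A x e) ∨
      (i = 1 ∧ A x a ∧ ¬ A x b ∧ A x c ∧ ¬ A x d ∧ ¬ A x e) ∨
      (i = 2 ∧ ¬ A x a ∧ A x b ∧ ¬ A x c ∧ A x d ∧ ¬ A x e) ∨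
      (i = 3 ∧ ¬ A x a ∧ ¬ A x b ∧ A x c ∧ ¬ A x d ∧ A x e) ∨
      (i = 4 ∧ A x a ∧ ¬ A x b ∧ ¬ A x c ∧ A x d ∧ ¬ A x e) ∨
      (i = 5 ∧ ∀ y, ¬ A x y) := by
    intro x
    rcases cls x with h | h | h | h | h | h
    exacts [⟨0, .inl ⟨rfl, h⟩⟩, ⟨1, .inr (.inl ⟨rfl, h⟩)⟩, ⟨2, .inr (.inr (.inl ⟨rfl, h⟩))⟩,
      ⟨3, .inr (.inr (.inr (.inl ⟨rfl, h⟩)))⟩, ⟨4, .inr (.inr (.inr (.inr (.inl ⟨rfl, h⟩))))⟩,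
      ⟨5, .inr (.inr (.inr (.inr (.inr ⟨rfl, h⟩))))⟩]
  choose f hf using ex
  refine exists_large_even_of_blowup A f fun x y => ?_
  -- vertices with a common neighbour are not adjacent
  have com : ∀ p, A x p → A y p → ¬ A x y := fun p hx hy h => tf x y p h hy hx
  -- vertices attached to two nonadjacent vertices of the cycle must be adjacent
  have adj : ∀ p q, ¬ A p q → A x p → A y q → ¬ A x q → ¬ A y p → A x y := by
    intro p q hpq hx hy hxq hyp
    by_contra h
    exact tk x p y q hx hy h hxq (fun h => hyp (hs _ _ h)) hpq
  have adj' : ∀ p q, ¬ A p q → A x q → A y p → ¬ A x p → ¬ A y q → A x y :=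
    fun p q hpq => adj q p (fun h => hpq (hs _ _ h))
  have iso : (∀ z, ¬ A y z) → ¬ A x y := fun h h' => h x (hs _ _ h')
  rcases hf x with ⟨hi, xa, xb, xc, xd, xe⟩ | ⟨hi, xa, xb, xc, xd, xe⟩ | ⟨hi, xa, xb, xc, xd, xe⟩ |
      ⟨hi, xa, xb, xc, xd, xe⟩ | ⟨hi, xa, xb, xc, xd, xe⟩ | ⟨hi, xi⟩ <;>
    rcases hf y with ⟨hj, ya, yb, yc, yd, ye⟩ | ⟨hj, ya, yb, yc, yd, ye⟩ |
      ⟨hj, ya, yb, yc, yd, ye⟩ | ⟨hj, ya, yb, yc, yd, ye⟩ | ⟨hj, ya, yb, yc, yd, ye⟩ | ⟨hj, yi⟩ <;>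
    rw [hi, hj] <;>
    first
    | exact iff_of_false (xi y) (by decide)
    | exact iff_of_false (iso yi) (by decide)
    | exact iff_of_false (com a xa ya) (by decide)
    | exact iff_of_false (com b xb yb) (by decide)
    | exact iff_of_false (com c xc yc) (by decide)
    | exact iff_of_false (com d xd yd) (by decide)
    | exact iff_of_false (com e xe ye) (by decide)
    | exact iff_of_true (adj a c nac xa yc xc ya) (by decide)
    | exact iff_of_true (adj b d nbd xb yd xd yb) (by decide)
    | exact iff_of_true (adj c e nce xc ye xe yc) (by decide)
    | exact iff_of_true (adj d a nda xd ya xa yd) (by decide)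
    | exact iff_of_true (adj e b neb xe yb xb ye) (by decide)
    | exact iff_of_true (adj' a c nac xc ya xa yc) (by decide)
    | exact iff_of_true (adj' b d nbd xd yb xb yd) (by decide)
    | exact iff_of_true (adj' c e nce xe yc xc ye) (by decide)
    | exact iff_of_true (adj' d a nda xa yd xd ya) (by decide)
    | exact iff_of_true (adj' e b neb xb ye xe yb) (by decide)

theorem exists_large_even {n : ℕ} (A : Fin n → Fin n → Prop) (v : Fin n)
    (hv : ∀ x, ¬ A v x) (hs : ∀ x y, A x y → A y x)
    (tf : ∀ a b c, A a b → A b c → A a c → False)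
    (tk : ∀ a b c d, A a b → A c d → ¬ A a c → ¬ A a d → ¬ A b c → ¬ A b d → False) :
    ∃ S : Finset (Fin n), (∀ a ∈ S, ∀ b ∈ S, ∀ c ∈ S, ¬ OddTriple A a b c) ∧
      (if n % 6 = 0 then n / 2 else (n + 2) / 2) ≤ S.card := by
  by_cases h : ∃ a b c d e, A a b ∧ A b c ∧ A c d ∧ A d e ∧ A e a
  · obtain ⟨a, b, c, d, e, h1, h2, h3, h4, h5⟩ := h
    exact exists_large_even_of_pentagon A hs tf tk h1 h2 h3 h4 h5
  · obtain ⟨p, hp⟩ := bipartite_of_no_pentagon A hs tf tk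
      (fun a b c d e h1 h2 h3 h4 h5 => h ⟨a, b, c, d, e, h1, h2, h3, h4, h5⟩)
    obtain ⟨S, hS, hc⟩ := exists_large_even_of_bipartite A v hv (fun x h => hv x (hs _ _ h)) p hp
    refine ⟨S, hS, le_trans ?_ hc⟩
    split_ifs <;> omega

theorem lower_bound {n : ℕ} (hn : 4 ≤ n) (E : Finset (Finset (Fin n)))
    (hE : ∀ e ∈ E, e.card = 3)
    (h4 : ∀ S : Finset (Fin n), S.card = 4 →
        (E.filter (fun e => e ⊆ S)).card = 2 ∨ (E.filter (fun e => e ⊆ S)).card = 4) :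
    ∃ S : Finset (Fin n), (∀ T ⊆ S, T.card = 3 → T ∈ E) ∧
        (if n % 6 = 0 then n / 2 else (n + 2) / 2) ≤ S.card := by
  set v : Fin n := ⟨0, by omega⟩
  set A : Fin n → Fin n → Prop := fun x y => x ≠ y ∧ x ≠ v ∧ y ≠ v ∧ {v, x, y} ∉ E with hA
  have hv : ∀ x, ¬ A v x := fun x h => h.2.1 rfl
  have hv' : ∀ x, ¬ A x v := fun x h => h.2.2.1 rfl
  have hs : ∀ x y, A x y → A y x := by
    rintro x y ⟨h1, h2, h3, h4⟩
    exact ⟨h1.symm, h3, h2, by rwa [Finset.pair_comm y x]⟩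
  have hA' : ∀ x y, x ≠ y → x ≠ v → y ≠ v → (A x y ↔ {v, x, y} ∉ E) := by
    intro x y h1 h2 h3
    simp [hA, h1, h2, h3]
  have quad : ∀ a b c d : Fin n, a ≠ b → a ≠ c → a ≠ d → b ≠ c → b ≠ d → c ≠ d →
      (({a, b, c} ∉ E ↔ ({a, b, d} ∉ E ↔ ({a, c, d} ∉ E ↔ {b, c, d} ∈ E))) → False) ∧
      ({a, b, c} ∉ E → {a, b, d} ∉ E → {a, c, d} ∉ E → {b, c, d} ∉ E → False) := by
    intro a b c d hab hac had hbc hbd hcd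
    have h := h4 {a, b, c, d} (by simp [*])
    rw [card_filter_four E hE hab hac had hbc hbd hcd] at h
    split_ifs at h <;> simp_all
  -- the odd triples are exactly the non-edges
  have odd : ∀ a b c : Fin n, a ≠ b → a ≠ c → b ≠ c →
      (({a, b, c} ∉ E) ↔ OddTriple A a b c) := by
    intro a b c hab hac hbc
    unfold OddTriple
    by_cases ha : a = v
    · subst ha
      simp only [hv, false_iff, iff_false, not_not]
      exact (hA' b c hbc hab.symm hac.symm).symm
    by_cases hb : b = v
    · subst hb
      simp only [hv, hv', false_iff, not_not]
      rw [hA' a c hac hab hbc.symm, Finset.insert_comm]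
    by_cases hc : c = v
    · subst hc
      simp only [hv', iff_true]
      rw [hA' a b hab hac hbc]
      have : ({a, b, v} : Finset (Fin n)) = {v, a, b} := by ext x; simp; tauto
      rw [this]
    rw [hA' a b hab ha hb, hA' b c hbc hb hc, hA' a c hac ha hc]
    have := (quad v a b c (Ne.symm ha) (Ne.symm hb) (Ne.symm hc) hab hac hbc).1
    tauto
  have no4 : ∀ a b c d : Fin n, a ≠ b → a ≠ c → a ≠ d → b ≠ c → b ≠ d → c ≠ d →
      OddTriple A a b c → OddTriple A a b d → OddTriple A a c d → OddTriple A b c d → False := by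
    intro a b c d hab hac had hbc hbd hcd
    rw [← odd a b c hab hac hbc, ← odd a b d hab had hbd, ← odd a c d hac had hcd,
      ← odd b c d hbc hbd hcd]
    exact (quad a b c d hab hac had hbc hbd hcd).2
  have tf : ∀ a b c, A a b → A b c → A a c → False := by
    intro a b c h1 h2 h3
    refine no4 v a b c h1.2.1.symm h1.2.2.1.symm h2.2.2.1.symm h1.1 h3.1 h2.1 ?_ ?_ ?_ ?_ <;>
      simp only [OddTriple, hv, h1, h2, h3, iff_false, not_true]
  have tk : ∀ a b c d, A a b → A c d → ¬ A a c → ¬ A a d → ¬ A b c → ¬ A b d → False := by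
    intro a b c d h1 h2 h3 h4 h5 h6
    have e1 : a ≠ c := by rintro rfl; exact h4 h2
    have e2 : a ≠ d := by rintro rfl; exact h3 (hs _ _ h2)
    have e3 : b ≠ c := by rintro rfl; exact h6 h2
    have e4 : b ≠ d := by rintro rfl; exact h5 (hs _ _ h2)
    refine no4 a b c d h1.1 e1 e2 e3 e4 h2.1 ?_ ?_ ?_ ?_ <;> 
      simp [OddTriple, h1, h2, h3, h4, h5, h6]
  obtain ⟨S, hS, hc⟩ := exists_large_even A v hv hs tf tk
  refine ⟨S, fun T hT h3 => ?_, hc⟩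
  obtain ⟨a, b, c, hab, hac, hbc, rfl⟩ := Finset.card_eq_three.mp h3
  by_contra hn
  exact hS a (hT (by simp)) b (hT (by simp)) c (hT (by simp)) ((odd a b c hab hac hbc).1 hn)

/-! ### Upper bound -/

theorem oddTriple_perm {n : ℕ} (A : Fin n → Fin n → Prop) (hs : ∀ x y, A x y ↔ A y x)
    {a b c x y z : Fin n} (hx : x = a ∨ x = b ∨ x = c) (hy : y = a ∨ y = b ∨ y = c)
    (hz : z = a ∨ z = b ∨ z = c) (hxy : x ≠ y) (hxz : x ≠ z) (hyz : y ≠ z) :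
    OddTriple A x y z ↔ OddTriple A a b c := by
  unfold OddTriple
  have s1 := hs a b
  have s2 := hs a c
  have s3 := hs b c
  clear hs
  rcases hx with rfl | rfl | rfl <;> rcases hy with rfl | rfl | rfl <;>
    rcases hz with rfl | rfl | rfl <;>
    first
    | exact absurd rfl hxy
    | exact absurd rfl hxz
    | exact absurd rfl hyz
    | grind

theorem two_or_four {p q r s : Prop} [Decidable (¬ p)] [Decidable (¬ q)] [Decidable (¬ r)]
    [Decidable (¬ s)] (par : (p ↔ q) ↔ (r ↔ s)) (h : p → q → r → s → False) :
    ((if ¬ p then 1 else 0) + (if ¬ q then 1 else 0) + (if ¬ r then 1 else 0) +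
      (if ¬ s then 1 else 0) = 2) ∨
    ((if ¬ p then 1 else 0) + (if ¬ q then 1 else 0) + (if ¬ r then 1 else 0) +
      (if ¬ s then 1 else 0) = 4) := by
  by_cases h1 : p <;> by_cases h2 : q <;> by_cases h3 : r <;> by_cases h4 : s <;> simp_all

/-- The 3-graph of even triples of a graph `A` that contains no 4-set of odd triples. Cocliques have at
most three elements, so only its cliques need to be bounded. -/
theorem construct {n m : ℕ} (A : Fin n → Fin n → Prop) (hs : ∀ x y, A x y ↔ A y x) (hm : 3 ≤ m)
    (no4 : ∀ a b c d : Fin n, a ≠ b → a ≠ c → a ≠ d → b ≠ c → b ≠ d → c ≠ d →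
      OddTriple A a b c → OddTriple A a b d → OddTriple A a c d → OddTriple A b c d → False)
    (hcl : ∀ S : Finset (Fin n), (∀ a ∈ S, ∀ b ∈ S, ∀ c ∈ S, a ≠ b → a ≠ c → b ≠ c →
      ¬ OddTriple A a b c) → S.card ≤ m) :
    ∃ E : Finset (Finset (Fin n)), (∀ e ∈ E, e.card = 3) ∧
      (∀ S : Finset (Fin n), S.card = 4 →
        (E.filter (fun e => e ⊆ S)).card = 2 ∨ (E.filter (fun e => e ⊆ S)).card = 4) ∧
      (∀ S : Finset (Fin n),
        ((∀ T ⊆ S, T.card = 3 → T ∈ E) ∨ (∀ T ⊆ S, T.card = 3 → T ∉ E)) → S.card ≤ m) := by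
  classical
  set E : Finset (Finset (Fin n)) := Finset.univ.filter (fun e => e.card = 3 ∧
    ∀ a ∈ e, ∀ b ∈ e, ∀ c ∈ e, a ≠ b → a ≠ c → b ≠ c → ¬ OddTriple A a b c) with hEdef
  have hE : ∀ e ∈ E, e.card = 3 := fun e he => (Finset.mem_filter.mp he).2.1
  have mem : ∀ a b c : Fin n, a ≠ b → a ≠ c → b ≠ c → ({a, b, c} ∈ E ↔ ¬ OddTriple A a b c) := by
    intro a b c hab hac hbc
    simp only [hEdef, Finset.mem_filter, Finset.mem_univ, true_and]
    constructor
    · intro h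
      exact h.2 a (by simp) b (by simp) c (by simp) hab hac hbc
    · intro h
      refine ⟨by simp [*], ?_⟩
      intro x hx y hy z hz hxy hxz hyz
      simp only [Finset.mem_insert, Finset.mem_singleton] at hx hy hz
      rw [oddTriple_perm A hs hx hy hz hxy hxz hyz]
      exact h
  have h4 : ∀ S : Finset (Fin n), S.card = 4 →
        (E.filter (fun e => e ⊆ S)).card = 2 ∨ (E.filter (fun e => e ⊆ S)).card = 4 := by
    intro S hS
    obtain ⟨a, b, c, d, hab, hac, had, hbc, hbd, hcd, rfl⟩ := Finset.card_eq_four.mp hS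
    rw [card_filter_four E hE hab hac had hbc hbd hcd]
    simp only [mem a b c hab hac hbc, mem a b d hab had hbd, mem a c d hac had hcd,
      mem b c d hbc hbd hcd]
    have := no4 a b c d hab hac had hbc hbd hcd
    exact two_or_four (oddTriple_parity A a b c d) this
  refine ⟨E, hE, h4, ?_⟩
  rintro S (h | h)
  · refine hcl S fun a ha b hb c hc hab hac hbc => ?_
    rw [← mem a b c hab hac hbc]
    refine h _ ?_ (by simp [*])
    intro x hx
    simp only [Finset.mem_insert, Finset.mem_singleton] at hx
    rcases hx with rfl | rfl | rfl <;> assumption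
  · by_contra hlt
    obtain ⟨Q, hQ, hQ4⟩ := Finset.exists_subset_card_eq (show 4 ≤ S.card by omega)
    have h0 : (E.filter (fun e => e ⊆ Q)).card = 0 := by
      rw [Finset.card_eq_zero, Finset.filter_eq_empty_iff]
      intro e he hs
      exact h e (hs.trans hQ) (hE e he) he
    have := h4 Q hQ4
    omega

/-- The circle construction: `i` and `j` are adjacent iff their indices differ by more
than `n / 2`. In a clique, take an adjacent pair `i < j` at minimal distance: no element
of the clique lies strictly between them, and this gap leaves at most `(n + 2) / 2` points.
Without adjacent pairs the clique lies in an interval of `n / 2 + 1` indices. -/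
theorem circle_bound {n : ℕ} (S : Finset (Fin n))
    (hS : ∀ a ∈ S, ∀ b ∈ S, ∀ c ∈ S, a ≠ b → a ≠ c → b ≠ c → ¬ OddTriple
      (fun i j : Fin n => i.val + n / 2 < j.val ∨ j.val + n / 2 < i.val) a b c) :
    S.card ≤ (n + 2) / 2 := by
  by_cases hl : ∃ d, ∃ i ∈ S, ∃ j ∈ S, j.val = i.val + d ∧ n / 2 < d
  · classical
    obtain ⟨i, hi, j, hj, hij, hd⟩ := Nat.find_spec hl
    have hmin := fun m (hm : m < Nat.find hl) => Nat.find_min hl hm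
    generalize Nat.find hl = d at *
    have hsub : S ⊆ Finset.univ \ Finset.Ioo i j := by
      intro x hx
      simp only [Finset.mem_sdiff, Finset.mem_univ, true_and, Finset.mem_Ioo, not_and, not_lt]
      intro hix
      by_contra hxj
      push Not at hxj
      rw [Fin.lt_def] at hix hxj
      have o := hS i hi x hx j hj (by omega) (by omega) (by omega)
      have m1 : ¬ n / 2 < x.val - i.val := fun h =>
        hmin (x.val - i.val) (by omega) ⟨i, hi, x, hx, by omega, h⟩
      have m2 : ¬ n / 2 < j.val - x.val := fun h =>
        hmin (j.val - x.val) (by omega) ⟨x, hx, j, hj, by omega, h⟩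
      unfold OddTriple at o
      omega
    have hc := Finset.card_le_card hsub
    rw [Finset.card_sdiff_of_subset (Finset.subset_univ _), Finset.card_univ, Fintype.card_fin,
      Fin.card_Ioo] at hc
    omega
  · push Not at hl
    rcases S.eq_empty_or_nonempty with rfl | hne
    · simp
    · have hmem := S.min'_mem hne
      have hsub : S.image Fin.val ⊆
          Finset.Icc (S.min' hne).val ((S.min' hne).val + n / 2) := by
        intro y hy
        obtain ⟨x, hx, rfl⟩ := Finset.mem_image.mp hy
        have h1 := S.min'_le x hx
        rw [Fin.le_def] at h1
        have h2 := hl (x.val - (S.min' hne).val) _ hmem x hx (by omega)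
        rw [Finset.mem_Icc]
        omega
      have hc := Finset.card_le_card hsub
      rw [Finset.card_image_of_injective _ Fin.val_injective, Nat.card_Icc] at hc
      omega

theorem circle_no4 {n : ℕ} (a b c d : Fin n) (hab : a ≠ b) (hac : a ≠ c) (had : a ≠ d)
    (hbc : b ≠ c) (hbd : b ≠ d) (hcd : c ≠ d) :
    let A := fun i j : Fin n => i.val + n / 2 < j.val ∨ j.val + n / 2 < i.val
    OddTriple A a b c → OddTriple A a b d → OddTriple A a c d → OddTriple A b c d → False := by
  intro A
  simp only [OddTriple, A]
  have := a.isLt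
  have := b.isLt
  have := c.isLt
  have := d.isLt
  rcases lt_or_gt_of_ne hab with h1 | h1 <;> rcases lt_or_gt_of_ne hac with h2 | h2 <;>
    rcases lt_or_gt_of_ne had with h3 | h3 <;> rcases lt_or_gt_of_ne hbc with h4 | h4 <;>
    rcases lt_or_gt_of_ne hbd with h5 | h5 <;> rcases lt_or_gt_of_ne hcd with h6 | h6 <;>
    rw [Fin.lt_def] at h1 h2 h3 h4 h5 h6 <;> omega

theorem pent_no4 : ∀ a b c d : Fin 6, OddTriple pent a b c → OddTriple pent a b d →
    OddTriple pent a c d → OddTriple pent b c d → False := by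
  decide

theorem pent_clique : ∀ a b c d : Fin 6, a ≠ b → a ≠ c → a ≠ d → b ≠ c → b ≠ d → c ≠ d →
    ¬ OddTriple pent a b c → ¬ OddTriple pent a b d → ¬ OddTriple pent a c d →
    ¬ OddTriple pent b c d → False := by
  decide

/-- A clique in the balanced blow-up meets at most three of the six residue classes. -/
theorem blowup_bound {n : ℕ} (h6 : n % 6 = 0) (f : Fin n → Fin 6)
    (hf : ∀ x, (f x).val = x.val % 6) (S : Finset (Fin n))
    (hS : ∀ a ∈ S, ∀ b ∈ S, ∀ c ∈ S, a ≠ b → a ≠ c → b ≠ c →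
      ¬ OddTriple (fun i j => pent (f i) (f j)) a b c) :
    S.card ≤ n / 2 := by
  have h3 : (S.image f).card ≤ 3 := by
    by_contra hlt
    obtain ⟨Q, hQ, hQ4⟩ := Finset.exists_subset_card_eq (show 4 ≤ (S.image f).card by omega)
    obtain ⟨a, b, c, d, hab, hac, had, hbc, hbd, hcd, rfl⟩ := Finset.card_eq_four.mp hQ4
    obtain ⟨x, hx, rfl⟩ := Finset.mem_image.mp (hQ (show a ∈ _ by simp))
    obtain ⟨y, hy, rfl⟩ := Finset.mem_image.mp (hQ (show b ∈ _ by simp))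
    obtain ⟨z, hz, rfl⟩ := Finset.mem_image.mp (hQ (show c ∈ _ by simp))
    obtain ⟨w, hw, rfl⟩ := Finset.mem_image.mp (hQ (show d ∈ _ by simp))
    have ne : ∀ {p q : Fin n}, f p ≠ f q → p ≠ q := fun h h' => h (congrArg f h')
    exact pent_clique _ _ _ _ hab hac had hbc hbd hcd
      (hS x hx y hy z hz (ne hab) (ne hac) (ne hbc))
      (hS x hx y hy w hw (ne hab) (ne had) (ne hbd))
      (hS x hx z hz w hw (ne hac) (ne had) (ne hcd))
      (hS y hy z hz w hw (ne hbc) (ne hbd) (ne hcd))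
  have hc : S.card ≤ ((S.image f) ×ˢ Finset.range (n / 6)).card := by
    refine Finset.card_le_card_of_injOn (fun x => (f x, x.val / 6)) ?_ ?_
    · intro x hx
      have := x.isLt
      simp only [Finset.coe_product, Set.mem_prod, Finset.mem_coe, Finset.mem_range]
      exact ⟨Finset.mem_image_of_mem f hx, by omega⟩
    · intro x _ y _ hxy
      simp only [Prod.mk.injEq] at hxy
      have h1 := hf x
      have h2 := hf y
      rw [hxy.1] at h1
      ext
      omega
  rw [Finset.card_product, Finset.card_range] at hc
  have := Nat.mul_le_mul_right (n / 6) h3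
  omega


/-- For every `n ≥ 4`, the minimum of `h(H)` over all `n`-vertex 3-graphs in which every
4-element vertex set spans exactly 2 or exactly 4 edges equals `n/2` if `6 ∣ n` and
`⌈(n+1)/2⌉` otherwise.  (In ℕ, `⌈(n+1)/2⌉ = (n+2)/2`.) -/
theorem stmt_10 (n : ℕ) (hn : 4 ≤ n) :
    (∀ E : Finset (Finset (Fin n)), (∀ e ∈ E, e.card = 3) →
      (∀ S : Finset (Fin n), S.card = 4 →
        (E.filter (fun e => e ⊆ S)).card = 2 ∨ (E.filter (fun e => e ⊆ S)).card = 4) →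
      ∃ S : Finset (Fin n),
        ((∀ T ⊆ S, T.card = 3 → T ∈ E) ∨ (∀ T ⊆ S, T.card = 3 → T ∉ E)) ∧
        (if n % 6 = 0 then n / 2 else (n + 2) / 2) ≤ S.card) ∧
    (∃ E : Finset (Finset (Fin n)), (∀ e ∈ E, e.card = 3) ∧
      (∀ S : Finset (Fin n), S.card = 4 →
        (E.filter (fun e => e ⊆ S)).card = 2 ∨ (E.filter (fun e => e ⊆ S)).card = 4) ∧
      (∀ S : Finset (Fin n),
        ((∀ T ⊆ S, T.card = 3 → T ∈ E) ∨ (∀ T ⊆ S, T.card = 3 → T ∉ E)) →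
        S.card ≤ (if n % 6 = 0 then n / 2 else (n + 2) / 2))) := by
  refine ⟨fun E hE h4 => ?_, ?_⟩
  · obtain ⟨S, hS, hc⟩ := lower_bound hn E hE h4
    exact ⟨S, Or.inl hS, hc⟩
  · split_ifs with h6
    · set f : Fin n → Fin 6 := fun x => ⟨x.val % 6, Nat.mod_lt _ (by norm_num)⟩
      refine construct (fun i j => pent (f i) (f j)) ?_ (by omega) ?_
        (blowup_bound h6 f fun _ => rfl)
      · intro x y
        simp only [pent]
        tauto
      · intro a b c d _ _ _ _ _ _
        exact pent_no4 (f a) (f b) (f c) (f d)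
    · exact construct (fun i j : Fin n => i.val + n / 2 < j.val ∨ j.val + n / 2 < i.val)
        (fun x y => or_comm) (by omega) circle_no4 circle_bound
end

section
/- Let H be a 3-graph in which no 4-element vertex set spans exactly 1 edge and no 4-element vertex set spans exactly 4 edges. Then for every vertex y of H, the link graph L(y) contains no induced 2K₂; that is, there is no 4-element set of vertices of L(y) inducing exactly two disjoint edges of L(y). -/
/-!
Suppose `ab` and `cd` induce a `2K₂` in the link of `y`. Among the triples of `{y, a, b, c}`
containing `y`, only `yab` is an edge, so `abc` must be an edge too, as otherwise this 4-set spans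
exactly one edge (`mem_of_link`). In the same way `abd`, `acd` and `bcd` are edges, and then
`{a, b, c, d}` spans exactly four edges, which is forbidden.
-/

lemma triple_cases {α : Type*} [DecidableEq α] {p q r s : α} {e : Finset α}
    (hpq : p ≠ q) (hpr : p ≠ r) (hps : p ≠ s) (hqr : q ≠ r) (hqs : q ≠ s) (hrs : r ≠ s)
    (he : e.card = 3) (hsub : e ⊆ {p, q, r, s}) :
    e = {p, q, r} ∨ e = {p, q, s} ∨ e = {p, r, s} ∨ e = {q, r, s} := by
  have hS : ({p, q, r, s} : Finset α).card = 4 := by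
    simp [*]
  -- The triple omits some vertex `x` of the 4-set, hence is contained in one of the four triples,
  -- and equals it by cardinality.
  obtain ⟨x, hxS, hxe⟩ := Finset.exists_mem_notMem_of_card_lt_card (s := e)
    (t := {p, q, r, s}) (by omega)
  have key : ∀ t : Finset α, t.card ≤ 3 → e ⊆ t → e = t := fun t ht h =>
    Finset.eq_of_subset_of_card_le h (by omega)
  simp only [Finset.mem_insert, Finset.mem_singleton] at hxS
  rcases hxS with rfl | rfl | rfl | rfl
  · refine Or.inr (Or.inr (Or.inr (key _ Finset.card_le_three fun z hz => ?_)))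
    have := hsub hz
    grind
  · refine Or.inr (Or.inr (Or.inl (key _ Finset.card_le_three fun z hz => ?_)))
    have := hsub hz
    grind
  · refine Or.inr (Or.inl (key _ Finset.card_le_three fun z hz => ?_))
    have := hsub hz
    grind
  · refine Or.inl (key _ Finset.card_le_three fun z hz => ?_)
    have := hsub hz
    grind

/-- If no 4-set spans exactly one edge and `yab` is the only edge through `y` inside
`{y, a, b, c}`, then the remaining triple `abc` is an edge. -/
lemma mem_of_link {α : Type*} [DecidableEq α] {E : Finset (Finset α)}
    (hE : ∀ e ∈ E, e.card = 3)
    (h1 : ∀ S : Finset α, S.card = 4 → (E.filter (fun e => e ⊆ S)).card ≠ 1)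
    {y a b c : α} (hay : a ≠ y) (hby : b ≠ y) (hcy : c ≠ y)
    (hab : a ≠ b) (hac : a ≠ c) (hbc : b ≠ c)
    (h : ({y, a, b} : Finset α) ∈ E) (h' : ({y, a, c} : Finset α) ∉ E)
    (h'' : ({y, b, c} : Finset α) ∉ E) : ({a, b, c} : Finset α) ∈ E := by
  by_contra hn
  refine h1 {y, a, b, c} (by simp [*, hay.symm, hby.symm, hcy.symm])
    (Finset.card_eq_one.2 ⟨{y, a, b}, ?_⟩)
  ext e
  simp only [Finset.mem_filter, Finset.mem_singleton]
  constructor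
  · rintro ⟨he, hs⟩
    rcases triple_cases hay.symm hby.symm hcy.symm hab hac hbc (hE e he) hs with
      rfl | rfl | rfl | rfl
    · rfl
    all_goals contradiction
  · rintro rfl
    exact ⟨h, by intro z; simp; tauto⟩

/-- In a 3-graph in which no 4-element vertex set spans exactly 1 edge and no 4-element vertex
set spans exactly 4 edges, the link graph of every vertex `y` contains no induced `2K₂`. -/
theorem stmt_12 (n : ℕ) (E : Finset (Finset (Fin n))) (hE : ∀ e ∈ E, e.card = 3)
    (h1 : ∀ S : Finset (Fin n), S.card = 4 → (E.filter (fun e => e ⊆ S)).card ≠ 1)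
    (h4 : ∀ S : Finset (Fin n), S.card = 4 → (E.filter (fun e => e ⊆ S)).card ≠ 4)
    (y : Fin n) :
    ¬ ∃ a b c d : Fin n, a ≠ y ∧ b ≠ y ∧ c ≠ y ∧ d ≠ y ∧
      a ≠ b ∧ a ≠ c ∧ a ≠ d ∧ b ≠ c ∧ b ≠ d ∧ c ≠ d ∧
      ({y, a, b} : Finset (Fin n)) ∈ E ∧ ({y, c, d} : Finset (Fin n)) ∈ E ∧
      ({y, a, c} : Finset (Fin n)) ∉ E ∧ ({y, a, d} : Finset (Fin n)) ∉ E ∧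
      ({y, b, c} : Finset (Fin n)) ∉ E ∧ ({y, b, d} : Finset (Fin n)) ∉ E := by
  rintro ⟨a, b, c, d, hay, hby, hcy, hdy, hab, hac, had, hbc, hbd, hcd,
    yab, ycd, yac, yad, ybc, ybd⟩
  have abc := mem_of_link hE h1 hay hby hcy hab hac hbc yab yac ybc
  have abd := mem_of_link hE h1 hay hby hdy hab had hbd yab yad ybd
  have acd : ({a, c, d} : Finset (Fin n)) ∈ E := by
    have := mem_of_link hE h1 hcy hdy hay hcd hac.symm had.symm ycd
      (by rwa [Finset.pair_comm c a]) (by rwa [Finset.pair_comm d a])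
    rwa [Finset.pair_comm d a, Finset.insert_comm] at this
  have bcd : ({b, c, d} : Finset (Fin n)) ∈ E := by
    have := mem_of_link hE h1 hcy hdy hby hcd hbc.symm hbd.symm ycd
      (by rwa [Finset.pair_comm c b]) (by rwa [Finset.pair_comm d b])
    rwa [Finset.pair_comm d b, Finset.insert_comm] at this
  have hS : ({a, b, c, d} : Finset (Fin n)).card = 4 := by simp [*]
  refine h4 {a, b, c, d} hS ?_
  -- Every triple of `{a, b, c, d}` is an edge, so the count is `4.choose 3 = 4`.
  have : E.filter (fun e => e ⊆ {a, b, c, d}) = Finset.powersetCard 3 {a, b, c, d} := by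
    ext e
    simp only [Finset.mem_filter, Finset.mem_powersetCard]
    constructor
    · rintro ⟨he, hs⟩
      exact ⟨hs, hE e he⟩
    · rintro ⟨hs, he⟩
      refine ⟨?_, hs⟩
      rcases triple_cases hab hac had hbc hbd hcd he hs with rfl | rfl | rfl | rfl <;> assumption
  rw [this, Finset.card_powersetCard, hS]
  rfl
end

section
/- Let H be a 3-graph in which no 4-element vertex set spans exactly 1 edge and no 4-element vertex set spans exactly 4 edges, and let y be a vertex of H. Then every set of vertices that is a clique of the link graph L(y), and every set of vertices that is a coclique of L(y), is a coclique of H (no 3-element subset of it is an edge of H). -/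
/-!
If a triple `T ⊆ S` were an edge, consider the 4-set `insert y T`. Its 3-subsets are `T` itself and
the triples `{y, u, w}` with `u, w ∈ T` distinct. When `S` is a clique of the link of `y`, all four
are edges; when `S` is a coclique of the link, `T` is the only edge. Both counts are forbidden.
-/

/-- In a 3-graph in which no 4-element vertex set spans exactly 1 edge and no 4-element vertex
set spans exactly 4 edges, every clique of the link graph of a vertex `y`, and every coclique
of that link graph, is a coclique of the 3-graph. -/
theorem stmt_13 (n : ℕ) (E : Finset (Finset (Fin n))) (hE : ∀ e ∈ E, e.card = 3)
    (h1 : ∀ S : Finset (Fin n), S.card = 4 → (E.filter (fun e => e ⊆ S)).card ≠ 1)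
    (h4 : ∀ S : Finset (Fin n), S.card = 4 → (E.filter (fun e => e ⊆ S)).card ≠ 4)
    (y : Fin n) (S : Finset (Fin n)) (hyS : y ∉ S)
    (hS : (∀ u ∈ S, ∀ w ∈ S, u ≠ w → ({y, u, w} : Finset (Fin n)) ∈ E) ∨
          (∀ u ∈ S, ∀ w ∈ S, u ≠ w → ({y, u, w} : Finset (Fin n)) ∉ E)) :
    ∀ T ⊆ S, T.card = 3 → T ∉ E := by
  intro T hTS hT hTE
  have hyT : y ∉ T := fun h => hyS (hTS h)
  have hQ : (insert y T).card = 4 := by rw [Finset.card_insert_of_notMem hyT, hT]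
  have key : ∀ e : Finset (Fin n), e ⊆ insert y T → e.card = 3 →
      e = T ∨ ∃ u ∈ S, ∃ w ∈ S, u ≠ w ∧ e = {y, u, w} := by
    intro e he hc
    by_cases hy : y ∈ e
    · right
      have h2 : (e.erase y).card = 2 := by rw [Finset.card_erase_of_mem hy, hc]
      obtain ⟨u, w, huw, h⟩ := Finset.card_eq_two.mp h2
      have hsub : e.erase y ⊆ T := Finset.subset_insert_iff.mp he
      rw [h] at hsub
      refine ⟨u, hTS (hsub (by simp)), w, hTS (hsub (by simp)), huw, ?_⟩
      rw [← h, Finset.insert_erase hy]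
    · left
      exact Finset.eq_of_subset_of_card_le ((Finset.subset_insert_iff_of_notMem hy).mp he)
        (by omega)
  rcases hS with hS | hS
  · apply h4 _ hQ
    have : E.filter (fun e => e ⊆ insert y T) = (insert y T).powersetCard 3 := by
      ext e
      rw [Finset.mem_filter, Finset.mem_powersetCard]
      refine ⟨fun h => ⟨h.2, hE e h.1⟩, fun h => ⟨?_, h.1⟩⟩
      rcases key e h.1 h.2 with rfl | ⟨u, hu, w, hw, huw, rfl⟩
      · exact hTE
      · exact hS u hu w hw huw
    rw [this, Finset.card_powersetCard, hQ]
    rfl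
  · apply h1 _ hQ
    rw [Finset.card_eq_one]
    refine ⟨T, ?_⟩
    ext e
    rw [Finset.mem_filter, Finset.mem_singleton]
    constructor
    · rintro ⟨heE, he⟩
      rcases key e he (hE e heE) with h | ⟨u, hu, w, hw, huw, rfl⟩
      · exact h
      · exact absurd heE (hS u hu w hw huw)
    · rintro rfl
      exact ⟨hTE, Finset.subset_insert _ _⟩
end

section
/- Let H be a 3-graph in which no 4-element vertex set spans exactly 2 edges and no 4-element vertex set spans exactly 4 edges. Then for every vertex v of H, the link graph L(v) contains no induced 4-cycle; that is, there is no 4-element set of vertices of L(v) inducing exactly the four edges of a cycle. -/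
/-! Suppose `a b c d` is an induced 4-cycle in the link of `v`. Each of the four vertex sets
consisting of `v` and three of `a, b, c, d` contains two consecutive cycle edges and one missing
diagonal, so it spans two edges through `v`; since it may not span exactly two edges, the triple
avoiding `v` is an edge as well (`edge_of_link_path`). Hence all four triples inside
`{a, b, c, d}` are edges, which is forbidden. -/

lemma eq_triple_of_subset {α : Type*} [DecidableEq α] {x y z w : α} {e : Finset α}
    (hxy : x ≠ y) (hxz : x ≠ z) (hxw : x ≠ w) (hyz : y ≠ z) (hyw : y ≠ w) (hzw : z ≠ w)
    (he : e.card = 3) (hs : e ⊆ {x, y, z, w}) :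
    e = {x, y, z} ∨ e = {x, y, w} ∨ e = {x, z, w} ∨ e = {y, z, w} := by
  have hS : ({x, y, z, w} : Finset α).card = 4 := by
    simp [*]
  have h1 : (({x, y, z, w} : Finset α) \ e).card = 1 := by
    rw [Finset.card_sdiff_of_subset hs, hS, he]
  obtain ⟨t, ht⟩ := Finset.card_eq_one.mp h1
  -- `e` is the 4-set with the single point `t` removed.
  have heq : e = ({x, y, z, w} : Finset α) \ {t} := by
    rw [← ht, Finset.sdiff_sdiff_eq_self hs]
  have htS : t ∈ ({x, y, z, w} : Finset α) := by
    have : t ∈ ({x, y, z, w} : Finset α) \ e := by simp [ht]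
    exact (Finset.mem_sdiff.mp this).1
  simp only [Finset.mem_insert, Finset.mem_singleton] at htS
  rcases htS with rfl | rfl | rfl | rfl
  · right; right; right; rw [heq]; ext u; simp; grind
  · right; right; left; rw [heq]; ext u; simp; grind
  · right; left; rw [heq]; ext u; simp; grind
  · left; rw [heq]; ext u; simp; grind

/-- An induced path `x y z` in the link of `v` forces the edge `{x, y, z}`: otherwise
`{v, x, y, z}` would span exactly two edges. -/
lemma edge_of_link_path {α : Type*} [DecidableEq α] {E : Finset (Finset α)}
    (hE : ∀ e ∈ E, e.card = 3)
    (h2 : ∀ S : Finset α, S.card = 4 → (E.filter (fun e => e ⊆ S)).card ≠ 2)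
    {v x y z : α} (hvx : v ≠ x) (hvy : v ≠ y) (hvz : v ≠ z)
    (hxy : x ≠ y) (hxz : x ≠ z) (hyz : y ≠ z)
    (h₁ : {v, x, y} ∈ E) (h₂ : {v, y, z} ∈ E) (h₃ : {v, x, z} ∉ E) : {x, y, z} ∈ E := by
  by_contra h
  apply h2 {v, x, y, z} (by simp [*])
  have : E.filter (fun e => e ⊆ {v, x, y, z}) = {{v, x, y}, {v, y, z}} := by
    ext e
    simp only [Finset.mem_filter, Finset.mem_insert, Finset.mem_singleton]
    constructor
    · rintro ⟨he, hs⟩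
      rcases eq_triple_of_subset hvx hvy hvz hxy hxz hyz (hE e he) hs with rfl | rfl | rfl | rfl
      · exact Or.inl rfl
      · exact absurd he h₃
      · exact Or.inr rfl
      · exact absurd he h
    · rintro (rfl | rfl)
      · exact ⟨h₁, by intro u; simp; grind⟩
      · exact ⟨h₂, by intro u; simp; grind⟩
  rw [this, Finset.card_pair]
  intro heq
  have : x ∈ ({v, y, z} : Finset α) := by rw [← heq]; simp
  simp at this
  grind

/-- In a 3-graph in which no 4-element vertex set spans exactly 2 edges and no 4-element vertex
set spans exactly 4 edges, the link graph of every vertex `v` contains no induced 4-cycle. -/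
theorem stmt_14 (n : ℕ) (E : Finset (Finset (Fin n))) (hE : ∀ e ∈ E, e.card = 3)
    (h2 : ∀ S : Finset (Fin n), S.card = 4 → (E.filter (fun e => e ⊆ S)).card ≠ 2)
    (h4 : ∀ S : Finset (Fin n), S.card = 4 → (E.filter (fun e => e ⊆ S)).card ≠ 4)
    (v : Fin n) :
    ¬ ∃ a b c d : Fin n, a ≠ v ∧ b ≠ v ∧ c ≠ v ∧ d ≠ v ∧
      a ≠ b ∧ a ≠ c ∧ a ≠ d ∧ b ≠ c ∧ b ≠ d ∧ c ≠ d ∧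
      ({v, a, b} : Finset (Fin n)) ∈ E ∧ ({v, b, c} : Finset (Fin n)) ∈ E ∧
      ({v, c, d} : Finset (Fin n)) ∈ E ∧ ({v, d, a} : Finset (Fin n)) ∈ E ∧
      ({v, a, c} : Finset (Fin n)) ∉ E ∧ ({v, b, d} : Finset (Fin n)) ∉ E := by
  rintro ⟨a, b, c, d, hav, hbv, hcv, hdv, hab, hac, had, hbc, hbd, hcd,
    e₁, e₂, e₃, e₄, n₁, n₂⟩
  have n₁' : ({v, c, a} : Finset (Fin n)) ∉ E := by rwa [Finset.pair_comm c a]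
  have n₂' : ({v, d, b} : Finset (Fin n)) ∉ E := by rwa [Finset.pair_comm d b]
  have t₁ := edge_of_link_path hE h2 hav.symm hbv.symm hcv.symm hab hac hbc e₁ e₂ n₁
  have t₂ := edge_of_link_path hE h2 hbv.symm hcv.symm hdv.symm hbc hbd hcd e₂ e₃ n₂
  have t₃ := edge_of_link_path hE h2 hcv.symm hdv.symm hav.symm hcd hac.symm had.symm e₃ e₄ n₁'
  have t₄ := edge_of_link_path hE h2 hdv.symm hav.symm hbv.symm had.symm hbd.symm hab e₄ e₁ n₂'
  have r₃ : ({c, d, a} : Finset (Fin n)) = {a, c, d} := by ext u; simp; tauto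
  have r₄ : ({d, a, b} : Finset (Fin n)) = {a, b, d} := by ext u; simp; tauto
  rw [r₃] at t₃
  rw [r₄] at t₄
  have hS : ({a, b, c, d} : Finset (Fin n)).card = 4 := by simp [*]
  apply h4 {a, b, c, d} hS
  have : E.filter (fun e => e ⊆ {a, b, c, d}) = Finset.powersetCard 3 {a, b, c, d} := by
    ext e
    simp only [Finset.mem_filter, Finset.mem_powersetCard]
    constructor
    · rintro ⟨he, hs⟩
      exact ⟨hs, hE e he⟩
    · rintro ⟨hs, he⟩
      refine ⟨?_, hs⟩
      rcases eq_triple_of_subset hab hac had hbc hbd hcd he hs with rfl | rfl | rfl | rfl <;>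
        assumption
  rw [this, Finset.card_powersetCard, hS]
  rfl
end

section
/- Let H be a 3-graph in which no 4-element vertex set spans exactly 2 edges and no 4-element vertex set spans exactly 3 edges, and let u and v be distinct vertices of H. Then the common neighborhood S = {x : {u,v,x} ∈ E(H)} is a clique of H (every 3-element subset of S is an edge of H); moreover, for all distinct x, y ∈ S, both {x,y,u} and {x,y,v} are edges of H. -/
/-!
Two distinct edges inside a 4-set `S` force all four triples of `S` to be edges, because the number
of edges spanned by `S` is at least 2, at most 4, and neither 2 nor 3
(`mem_of_two_edges`). Applied to `{u, v, x, y}` this gives the edges `{x, y, u}` and `{x, y, v}`.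
For `x, y, z` in the common neighborhood, `{x, y, u}` and `{x, z, u}` are therefore edges, and
the same fact applied to `{u, x, y, z}` shows that `{x, y, z}` is an edge.
-/

theorem mem_of_two_edges {n : ℕ} {E : Finset (Finset (Fin n))} (hE : ∀ e ∈ E, e.card = 3)
    (h2 : ∀ S : Finset (Fin n), S.card = 4 → (E.filter (fun e => e ⊆ S)).card ≠ 2)
    (h3 : ∀ S : Finset (Fin n), S.card = 4 → (E.filter (fun e => e ⊆ S)).card ≠ 3)
    {S e f t : Finset (Fin n)} (hS : S.card = 4) (he : e ∈ E) (hf : f ∈ E) (hef : e ≠ f)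
    (heS : e ⊆ S) (hfS : f ⊆ S) (htS : t ⊆ S) (ht : t.card = 3) : t ∈ E := by
  have hsub : E.filter (fun e => e ⊆ S) ⊆ S.powersetCard 3 := by
    intro a ha
    rw [Finset.mem_filter] at ha
    exact Finset.mem_powersetCard.2 ⟨ha.2, hE a ha.1⟩
  have hlow : 1 < (E.filter (fun e => e ⊆ S)).card :=
    Finset.one_lt_card.2 ⟨e, Finset.mem_filter.2 ⟨he, heS⟩, f, Finset.mem_filter.2 ⟨hf, hfS⟩, hef⟩
  have hcard : (S.powersetCard 3).card = 4 := by
    rw [Finset.card_powersetCard, hS]; rfl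
  have heq := Finset.eq_of_subset_of_card_le hsub (by
    have := h2 S hS
    have := h3 S hS
    omega)
  have hmem : t ∈ E.filter (fun e => e ⊆ S) := heq ▸ Finset.mem_powersetCard.2 ⟨htS, ht⟩
  exact (Finset.mem_filter.1 hmem).1

/-- Two edges sharing the pair `{a, b}` force the other two triples on their four vertices. -/
theorem edges_of_shared_pair {n : ℕ} {E : Finset (Finset (Fin n))} (hE : ∀ e ∈ E, e.card = 3)
    (h2 : ∀ S : Finset (Fin n), S.card = 4 → (E.filter (fun e => e ⊆ S)).card ≠ 2)
    (h3 : ∀ S : Finset (Fin n), S.card = 4 → (E.filter (fun e => e ⊆ S)).card ≠ 3)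
    {a b c d : Fin n} (hc : ({a, b, c} : Finset (Fin n)) ∈ E)
    (hd : ({a, b, d} : Finset (Fin n)) ∈ E) (hcd : c ≠ d) :
    ({c, d, a} : Finset (Fin n)) ∈ E ∧ ({c, d, b} : Finset (Fin n)) ∈ E := by
  -- Edges have three elements, so `a, b, c` and `a, b, d` are triples of distinct vertices.
  have distinct : ∀ x, ({a, b, x} : Finset (Fin n)) ∈ E → a ≠ b ∧ a ≠ x ∧ b ≠ x := by
    intro x hx
    have h := hE _ hx
    refine ⟨?_, ?_, ?_⟩ <;> rintro rfl
    · have := Finset.card_le_two (a := a) (b := x); simp at h; omega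
    · have := Finset.card_le_two (a := b) (b := a); simp at h; omega
    · have := Finset.card_le_two (a := a) (b := b); simp at h; omega
  obtain ⟨hab, hac, hbc⟩ := distinct c hc
  obtain ⟨-, had, hbd⟩ := distinct d hd
  have hS : ({a, b, c, d} : Finset (Fin n)).card = 4 := by
    simp [*]
  have hne : ({a, b, c} : Finset (Fin n)) ≠ {a, b, d} := by
    intro h
    have : c ∈ ({a, b, d} : Finset (Fin n)) := by rw [← h]; simp
    simp [hac.symm, hbc.symm, hcd] at this
  constructor <;>
    refine mem_of_two_edges hE h2 h3 hS hc hd hne ?_ ?_ ?_ ?_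
  all_goals first
    | (intro z; simp only [Finset.mem_insert, Finset.mem_singleton]; tauto)
    | exact Finset.card_eq_three.2 ⟨_, _, _, hcd, hac.symm, had.symm, rfl⟩
    | exact Finset.card_eq_three.2 ⟨_, _, _, hcd, hbc.symm, hbd.symm, rfl⟩

/-- In a 3-graph in which no 4-element vertex set spans exactly 2 edges and no 4-element vertex
set spans exactly 3 edges, the common neighborhood `S = {x : {u,v,x} ∈ E}` of two distinct
vertices `u, v` is a clique; moreover for distinct `x, y ∈ S` both `{x,y,u}` and `{x,y,v}` are
edges. -/
theorem stmt_15 (n : ℕ) (E : Finset (Finset (Fin n))) (hE : ∀ e ∈ E, e.card = 3)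
    (h2 : ∀ S : Finset (Fin n), S.card = 4 → (E.filter (fun e => e ⊆ S)).card ≠ 2)
    (h3 : ∀ S : Finset (Fin n), S.card = 4 → (E.filter (fun e => e ⊆ S)).card ≠ 3)
    (u v : Fin n) (huv : u ≠ v) :
    (∀ T ⊆ Finset.univ.filter (fun x => ({u, v, x} : Finset (Fin n)) ∈ E),
      T.card = 3 → T ∈ E) ∧
    (∀ x y : Fin n, ({u, v, x} : Finset (Fin n)) ∈ E → ({u, v, y} : Finset (Fin n)) ∈ E →
      x ≠ y → ({x, y, u} : Finset (Fin n)) ∈ E ∧ ({x, y, v} : Finset (Fin n)) ∈ E) := by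
  have key : ∀ x y : Fin n, ({u, v, x} : Finset (Fin n)) ∈ E → ({u, v, y} : Finset (Fin n)) ∈ E →
      x ≠ y → ({x, y, u} : Finset (Fin n)) ∈ E ∧ ({x, y, v} : Finset (Fin n)) ∈ E :=
    fun x y hx hy hxy => edges_of_shared_pair hE h2 h3 hx hy hxy
  refine ⟨fun T hT hcard => ?_, key⟩
  obtain ⟨x, y, z, hxy, hxz, hyz, rfl⟩ := Finset.card_eq_three.1 hcard
  have nbr : ∀ w ∈ ({x, y, z} : Finset (Fin n)), ({u, v, w} : Finset (Fin n)) ∈ E :=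
    fun w hw => (Finset.mem_filter.1 (hT hw)).2
  have hx := nbr x (by simp)
  have hy := nbr y (by simp)
  have hz := nbr z (by simp)
  have rot : ∀ a b c : Fin n, ({a, b, c} : Finset (Fin n)) = {c, a, b} := by
    intro a b c
    ext w
    simp only [Finset.mem_insert, Finset.mem_singleton]
    tauto
  -- The edges `{u, x, y}` and `{u, x, z}` share the pair `{u, x}`.
  have hxyu := (key x y hx hy hxy).1
  have hxzu := (key x z hx hz hxz).1
  rw [rot] at hxyu hxzu
  have h := (edges_of_shared_pair hE h2 h3 hxyu hxzu hyz).2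
  rwa [rot] at h
end

section
/- Let H be a 3-graph in which no 4-element vertex set spans exactly 1 edge and no 4-element vertex set spans exactly 3 edges, and let v be a vertex of H. Then every clique of the link graph L(v) is a clique of H (every 3-element subset of it is an edge of H), and every coclique of L(v) is a coclique of H (no 3-element subset of it is an edge of H). -/
/-!
For a 3-element set `T ⊆ S`, the 3-element subsets of the 4-element set `insert v T` are `T` and
the three triples `{v, u, w}` with `u, w ∈ T` distinct (`eq_triple_of_subset_insert`).
If `S` is a clique of the link, those three triples are edges, so `T ∉ E` would make
`insert v T` span exactly 3 edges. If `S` is a coclique of the link, none of them is an edge, so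
`T ∈ E` would make `insert v T` span exactly 1 edge.
-/

theorem eq_triple_of_subset_insert {α : Type*} [DecidableEq α] {v : α} {T e : Finset α}
    (hT : T.card = 3) (he : e.card = 3) (hsub : e ⊆ insert v T) (hne : e ≠ T) :
    ∃ u ∈ T, ∃ w ∈ T, u ≠ w ∧ e = {v, u, w} := by
  have hv : v ∈ e := by
    by_contra hv
    exact hne (Finset.eq_of_subset_of_card_le
      ((Finset.subset_insert_iff_of_notMem hv).1 hsub) (by omega))
  have hcard : (e.erase v).card = 2 := by rw [Finset.card_erase_of_mem hv, he]
  obtain ⟨u, w, huw, heq⟩ := Finset.card_eq_two.1 hcard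
  have hs : ({u, w} : Finset α) ⊆ T := heq ▸ Finset.subset_insert_iff.1 hsub
  refine ⟨u, hs (by simp), w, hs (by simp), huw, ?_⟩
  rw [← heq, Finset.insert_erase hv]

/-- In a 3-graph in which no 4-element vertex set spans exactly 1 edge and no 4-element vertex
set spans exactly 3 edges, every clique of the link graph of a vertex `v` is a clique of the
3-graph, and every coclique of that link graph is a coclique of the 3-graph. -/
theorem stmt_16 (n : ℕ) (E : Finset (Finset (Fin n))) (hE : ∀ e ∈ E, e.card = 3)
    (h1 : ∀ S : Finset (Fin n), S.card = 4 → (E.filter (fun e => e ⊆ S)).card ≠ 1)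
    (h3 : ∀ S : Finset (Fin n), S.card = 4 → (E.filter (fun e => e ⊆ S)).card ≠ 3)
    (v : Fin n) (S : Finset (Fin n)) (hvS : v ∉ S) :
    ((∀ u ∈ S, ∀ w ∈ S, u ≠ w → ({v, u, w} : Finset (Fin n)) ∈ E) →
      ∀ T ⊆ S, T.card = 3 → T ∈ E) ∧
    ((∀ u ∈ S, ∀ w ∈ S, u ≠ w → ({v, u, w} : Finset (Fin n)) ∉ E) →
      ∀ T ⊆ S, T.card = 3 → T ∉ E) := by
  have hQ : ∀ T ⊆ S, T.card = 3 → (insert v T).card = 4 := fun T hTS hT => by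
    rw [Finset.card_insert_of_notMem fun h => hvS (hTS h), hT]
  refine ⟨fun hclique T hTS hT => ?_, fun hcoclique T hTS hT hTE => ?_⟩
  · by_contra hTE
    apply h3 (insert v T) (hQ T hTS hT)
    have hfilter : E.filter (fun e => e ⊆ insert v T)
        = (Finset.powersetCard 3 (insert v T)).erase T := by
      ext e
      simp only [Finset.mem_filter, Finset.mem_erase, Finset.mem_powersetCard]
      constructor
      · rintro ⟨heE, hsub⟩
        exact ⟨fun h => hTE (h ▸ heE), hsub, hE e heE⟩
      · rintro ⟨hne, hsub, he⟩
        obtain ⟨u, hu, w, hw, huw, rfl⟩ := eq_triple_of_subset_insert hT he hsub hne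
        exact ⟨hclique u (hTS hu) w (hTS hw) huw, hsub⟩
    rw [hfilter, Finset.card_erase_of_mem
      (Finset.mem_powersetCard.2 ⟨Finset.subset_insert v T, hT⟩),
      Finset.card_powersetCard, hQ T hTS hT]
    rfl
  · apply h1 (insert v T) (hQ T hTS hT)
    refine Finset.card_eq_one.2 ⟨T, ?_⟩
    ext e
    simp only [Finset.mem_filter, Finset.mem_singleton]
    constructor
    · rintro ⟨heE, hsub⟩
      by_contra hne
      obtain ⟨u, hu, w, hw, huw, rfl⟩ := eq_triple_of_subset_insert hT (hE e heE) hsub hne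
      exact hcoclique u (hTS hu) w (hTS hw) huw heE
    · rintro rfl
      exact ⟨hTE, Finset.subset_insert v e⟩
end

section
/- For every n ≥ 3, the 3-graph H_n has a coclique of size ⌈(n+1)/2⌉ (e.g., any set of ⌈(n+1)/2⌉ cyclically consecutive vertices), and if n is odd then every coclique of H_n has size at most (n+1)/2; hence for odd n ≥ 3 the maximum size of a coclique of H_n is exactly (n+1)/2. -/
/-!
For the lower bound, `⌊n/2⌋ + 1` consecutive vertices span at most half of the circle, so no triangle
on them contains the center.

For the upper bound write `n = 2m + 1` and call `x`, `x + m` (mod `n`) almost antipodal. A vertex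
strictly inside the longer of the two arcs cut out by such a pair (an arc with `m` interior vertices)
forms an edge with it, so a coclique containing an almost antipodal pair has at most
`n - m = m + 1` vertices (`card_le_of_diff_eq`, `card_le_of_diff_eq_succ`). A coclique without such a
pair is disjoint from its rotation by `m`, hence has at most `m` vertices (`card_le_of_no_pair`).
-/

/-- No three vertices of `S` form an edge of `H_n`. -/
def IsCoclique {n : ℕ} (S : Finset (Fin n)) : Prop :=
  ∀ a ∈ S, ∀ b ∈ S, ∀ c ∈ S, a.val < b.val → b.val < c.val →
    ¬ (2 * (b.val - a.val) < n ∧ 2 * (c.val - b.val) < n ∧ 2 * (n - (c.val - a.val)) < n)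

/-- Here the longer arc passes through `0`, so `S` lies in the interval from `a` to `b`. -/
lemma card_le_of_diff_eq {n m : ℕ} (hm : n = 2 * m + 1) {S : Finset (Fin n)} (hS : IsCoclique S)
    {a b : Fin n} (ha : a ∈ S) (hb : b ∈ S) (hab : b.val = a.val + m) (hpos : 0 < m) :
    S.card ≤ m + 1 := by
  have hsub : S ⊆ Finset.Icc a b := by
    intro c hc
    have h₁ := hS a ha b hb c hc
    have h₂ := hS c hc a ha b hb
    rw [Finset.mem_Icc, Fin.le_def, Fin.le_def]
    omega
  have hcard := Finset.card_le_card hsub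
  rw [Fin.card_Icc] at hcard
  omega

/-- Here the longer arc is the interval from `a` to `b`, so `S` avoids its interior. -/
lemma card_le_of_diff_eq_succ {n m : ℕ} (hm : n = 2 * m + 1) {S : Finset (Fin n)}
    (hS : IsCoclique S) {a b : Fin n} (ha : a ∈ S) (hb : b ∈ S)
    (hab : b.val = a.val + m + 1) : S.card ≤ m + 1 := by
  have hsub : S ⊆ (Finset.Ioo a b)ᶜ := by
    intro c hc
    have h := hS a ha c hc b hb
    rw [Finset.mem_compl, Finset.mem_Ioo, Fin.lt_def, Fin.lt_def]
    omega
  have hcard := Finset.card_le_card hsub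
  rw [Finset.card_compl, Fin.card_Ioo, Fintype.card_fin] at hcard
  omega

lemma card_le_of_no_pair {n m : ℕ} (hm : n = 2 * m + 1) {S : Finset (Fin n)}
    (hS : ∀ a ∈ S, ∀ b ∈ S, b.val ≠ a.val + m ∧ b.val ≠ a.val + m + 1) : S.card ≤ m := by
  -- `f` is the rotation `x ↦ x + m` modulo `n`.
  let f : Fin n → Fin n := fun x =>
    ⟨if x.val + m < n then x.val + m else x.val + m - n, by split_ifs <;> omega⟩
  have hf : ∀ x, (f x).val = if x.val + m < n then x.val + m else x.val + m - n := fun _ => rfl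
  have hinj : Function.Injective f := by
    intro x y hxy
    have h := congrArg Fin.val hxy
    rw [hf, hf] at h
    apply Fin.ext
    split_ifs at h <;> omega
  have hdisj : Disjoint S (S.image f) := by
    rw [Finset.disjoint_left]
    intro y hy hy'
    obtain ⟨x, hx, rfl⟩ := Finset.mem_image.mp hy'
    have h₁ := (hS x hx _ hy).1
    have h₂ := (hS _ hy x hx).2
    rw [hf] at h₁ h₂
    split_ifs at h₁ h₂ <;> omega
  have hcard := Finset.card_le_univ (S ∪ S.image f)
  rw [Finset.card_union_of_disjoint hdisj, Finset.card_image_of_injective _ hinj,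
    Fintype.card_fin] at hcard
  omega

/-- Let `H_n` be the 3-graph on `{0,…,n-1}` in which `a < b < c` form an edge iff
`b - a < n/2`, `c - b < n/2` and `n - (c - a) < n/2` (the triangle on the corresponding
vertices of a regular `n`-gon contains its center).  For every `n ≥ 3`, `H_n` has a coclique
of size `⌈(n+1)/2⌉` (which equals `(n+2)/2` in ℕ), and if `n` is odd then every coclique of
`H_n` has size at most `(n+1)/2`. -/
theorem stmt_17 (n : ℕ) (hn : 3 ≤ n) :
    (∃ S : Finset (Fin n),
      (∀ a ∈ S, ∀ b ∈ S, ∀ c ∈ S, a.val < b.val → b.val < c.val →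
        ¬ (2 * (b.val - a.val) < n ∧ 2 * (c.val - b.val) < n ∧
            2 * (n - (c.val - a.val)) < n)) ∧
      S.card = (n + 2) / 2) ∧
    (Odd n → ∀ S : Finset (Fin n),
      (∀ a ∈ S, ∀ b ∈ S, ∀ c ∈ S, a.val < b.val → b.val < c.val →
        ¬ (2 * (b.val - a.val) < n ∧ 2 * (c.val - b.val) < n ∧
            2 * (n - (c.val - a.val)) < n)) →
      S.card ≤ (n + 1) / 2) := by
  constructor
  · refine ⟨Finset.Iic ⟨n / 2, by omega⟩, ?_, ?_⟩
    · intro a _ b _ c hc hab hbc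
      rw [Finset.mem_Iic, Fin.le_def] at hc
      simp only at hc
      omega
    · rw [Fin.card_Iic]
      simp only
      omega
  · rintro ⟨m, hm⟩ S hS
    have key : S.card ≤ m + 1 := by
      by_cases h : ∀ a ∈ S, ∀ b ∈ S, b.val ≠ a.val + m ∧ b.val ≠ a.val + m + 1
      · exact (card_le_of_no_pair hm h).trans (Nat.le_succ m)
      · push Not at h
        obtain ⟨a, ha, b, hb, hab⟩ := h
        by_cases hab' : b.val = a.val + m
        · exact card_le_of_diff_eq hm hS ha hb hab' (by omega)
        · exact card_le_of_diff_eq_succ hm hS ha hb (hab hab')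
    omega
end

section
/- Let H' be the 3-graph with vertex set {1,2,3,4,5,6} and edge set {{1,2,3},{1,2,4},{3,4,5},{3,4,6},{5,6,1},{5,6,2},{1,3,5},{1,4,6},{2,3,6},{2,4,5}}. Let V₁, …, V₆ be pairwise disjoint finite sets with |V₁| + ⋯ + |V₆| = n, and let H be the 3-graph on V₁ ∪ ⋯ ∪ V₆ in which three vertices form an edge if and only if they lie in three distinct parts V_i, V_j, V_k with {i,j,k} an edge of H' (triples meeting some part in at least two vertices are non-edges). Then H has a coclique of size at least n/2. -/
/-!
The ten edges of `H'` form a 2-(6,3,2) design: every vertex lies in exactly five edges, and the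
complement of an edge is never an edge. Hence the ten complements of edges are cocliques of `H'`,
and each vertex lies in exactly five of them. The union of the parts indexed by a coclique of `H'`
is a coclique of the blow-up (`biUnion_coclique`), and the sizes of these ten unions add up to
`5 * n`, so one of them has size at least `n / 2` (`exists_large_coclique`).
-/

/-- The edge set of the 3-graph `H'`. -/
def baseEdges : Finset (Finset ℕ) :=
  {{1,2,3}, {1,2,4}, {3,4,5}, {3,4,6}, {5,6,1}, {5,6,2}, {1,3,5}, {1,4,6}, {2,3,6}, {2,4,5}}

/-- Weighted averaging over the ten complements of edges of `H'`. -/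
lemma exists_large_coclique (w : ℕ → ℕ) :
    ∃ A ⊆ Finset.Icc 1 6, (∀ e ∈ baseEdges, ¬ e ⊆ A) ∧
      ∑ i ∈ Finset.Icc 1 6, w i ≤ 2 * ∑ i ∈ A, w i := by
  have hsum : ∑ i ∈ Finset.Icc 1 6, w i = w 1 + w 2 + w 3 + w 4 + w 5 + w 6 := by
    simp [Finset.sum_Icc_succ_top]
  by_contra! hlt
  have key : ∀ a b c : ℕ, a < b → b < c → ({a, b, c} : Finset ℕ) ⊆ Finset.Icc 1 6 →
      (∀ e ∈ baseEdges, ¬ e ⊆ {a, b, c}) →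
      2 * (w a + w b + w c) < w 1 + w 2 + w 3 + w 4 + w 5 + w 6 := by
    intro a b c hab hbc hsub hind
    have h := hlt {a, b, c} hsub hind
    rw [hsum, Finset.sum_insert (by simp; omega), Finset.sum_pair (by omega)] at h
    omega
  have h1 := key 4 5 6 (by decide) (by decide) (by decide) (by decide)
  have h2 := key 3 5 6 (by decide) (by decide) (by decide) (by decide)
  have h3 := key 1 2 6 (by decide) (by decide) (by decide) (by decide)
  have h4 := key 1 2 5 (by decide) (by decide) (by decide) (by decide)
  have h5 := key 2 3 4 (by decide) (by decide) (by decide) (by decide)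
  have h6 := key 1 3 4 (by decide) (by decide) (by decide) (by decide)
  have h7 := key 2 4 6 (by decide) (by decide) (by decide) (by decide)
  have h8 := key 2 3 5 (by decide) (by decide) (by decide) (by decide)
  have h9 := key 1 4 5 (by decide) (by decide) (by decide) (by decide)
  have h10 := key 1 3 6 (by decide) (by decide) (by decide) (by decide)
  linarith

lemma baseEdges_subset : ∀ e ∈ baseEdges, e ⊆ Finset.Icc 1 6 := by decide

/-- The union of the parts indexed by a coclique `A` of `H'` is a coclique of the blow-up: by
disjointness, a vertex of the union can only lie in parts with index in `A`. -/
lemma biUnion_coclique {α : Type*} [DecidableEq α] (V : ℕ → Finset α)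
    (hdisj : ∀ i ∈ Finset.Icc 1 6, ∀ j ∈ Finset.Icc 1 6, i ≠ j → Disjoint (V i) (V j))
    {A : Finset ℕ} (hA : A ⊆ Finset.Icc 1 6) (hind : ∀ e ∈ baseEdges, ¬ e ⊆ A) :
    ∀ T ⊆ A.biUnion V, ¬ ∃ i j k : ℕ, ({i, j, k} : Finset ℕ) ∈ baseEdges ∧
      ∃ x ∈ V i, ∃ y ∈ V j, ∃ z ∈ V k, T = ({x, y, z} : Finset α) := by
  rintro T hT ⟨i, j, k, he, x, hx, y, hy, z, hz, rfl⟩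
  have hrange := baseEdges_subset _ he
  have index_mem : ∀ l ∈ ({i, j, k} : Finset ℕ), ∀ v ∈ V l, v ∈ A.biUnion V → l ∈ A := by
    intro l hl v hv hvA
    obtain ⟨a, ha, hva⟩ := Finset.mem_biUnion.mp hvA
    by_contra hlA
    have hne : l ≠ a := fun h => hlA (h ▸ ha)
    exact Finset.disjoint_left.mp (hdisj l (hrange hl) a (hA ha) hne) hv hva
  refine hind _ he fun l hl => ?_
  have hl' := hl
  simp only [Finset.mem_insert, Finset.mem_singleton] at hl'
  rcases hl' with rfl | rfl | rfl
  · exact index_mem _ hl x hx (hT (by simp))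
  · exact index_mem _ hl y hy (hT (by simp))
  · exact index_mem _ hl z hz (hT (by simp))

/-- Let `H'` be the 3-graph with vertex set `{1,…,6}` and the ten listed edges, and let
`V 1, …, V 6` be pairwise disjoint finite sets with `|V 1| + ⋯ + |V 6| = n`.  The blow-up of
`H'` with parts `V 1, …, V 6` (three vertices form an edge iff they lie in three distinct
parts `V i, V j, V k` with `{i,j,k}` an edge of `H'`) has a coclique of size at least `n/2`. -/
theorem stmt_19 {α : Type*} [DecidableEq α] (V : ℕ → Finset α)
    (hdisj : ∀ i ∈ Finset.Icc 1 6, ∀ j ∈ Finset.Icc 1 6, i ≠ j → Disjoint (V i) (V j))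
    (n : ℕ) (hn : n = ∑ i ∈ Finset.Icc 1 6, (V i).card) :
    ∃ S : Finset α, S ⊆ (Finset.Icc 1 6).biUnion V ∧
      (∀ T ⊆ S, ¬ ∃ i j k : ℕ,
        ({i, j, k} : Finset ℕ) ∈ ({{1,2,3}, {1,2,4}, {3,4,5}, {3,4,6}, {5,6,1}, {5,6,2},
              {1,3,5}, {1,4,6}, {2,3,6}, {2,4,5}} : Finset (Finset ℕ)) ∧
        ∃ x ∈ V i, ∃ y ∈ V j, ∃ z ∈ V k, T = ({x, y, z} : Finset α)) ∧
      (n : ℝ) / 2 ≤ (S.card : ℝ) := by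
  obtain ⟨A, hA, hind, hcard⟩ := exists_large_coclique fun i => (V i).card
  refine ⟨A.biUnion V, Finset.biUnion_subset_biUnion_of_subset_left V hA,
    biUnion_coclique V hdisj hA hind, ?_⟩
  rw [Finset.card_biUnion fun i hi j hj hij => hdisj i (hA hi) j (hA hj) hij]
  have h : (n : ℝ) ≤ 2 * ((∑ i ∈ A, (V i).card : ℕ) : ℝ) := by
    rw [hn]
    exact_mod_cast hcard
  linarith
end
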